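/- Let 1<p<∞ with conjugate exponent q (1/p+1/q=1), and let w be a non-increasing positive function on I=(0,a), 0<a≤∞, with W(t)=∫₀ᵗ w dm finite on I. For a measurable function f on I, suppose N(f) := sup{ ∫_I |f·g| dm : g measurable on I, ∫_I (g*)^p w dm ≤ 1 } is finite. Then N(f) = inf{ (∫_I (g*)^q w^{1−q} dm)^{1/q} : g measurable on I with locally integrable g* and f ≺ g }; that is, the Köthe dual norm of the classical Lorentz space Λ_{p,w} is given by this infimum. -/

import Mathlib

open MeasureTheory Set Filter
open scoped ENNReal

/-- The interval `(0, a)` for `a : ℝ≥0∞` (equals `(0,∞)` when `a = ∞`). -/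
def Iset (a : ℝ≥0∞) : Set ℝ := {x : ℝ | 0 < x ∧ ENNReal.ofReal x < a}

/-- Lebesgue measure restricted to the interval `(0,a)`. -/
noncomputable def volI (a : ℝ≥0∞) : Measure ℝ := volume.restrict (Iset a)

/-- Decreasing rearrangement of an `ℝ≥0∞`-valued function with respect to a measure `μ`:
`f^{*,μ}(t) = inf {s > 0 : μ({f > s}) ≤ t}`. -/
noncomputable def rearrE (μ : Measure ℝ) (f : ℝ → ℝ≥0∞) (t : ℝ) : ℝ≥0∞ :=
  sInf {s : ℝ≥0∞ | 0 < s ∧ μ {x | s < f x} ≤ ENNReal.ofReal t}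

/-- Decreasing rearrangement of a real function with respect to a measure `μ` on `ℝ`:
`f^{*,μ}(t) = inf {s > 0 : μ({|f| > s}) ≤ t}`. -/
noncomputable def rearr (μ : Measure ℝ) (f : ℝ → ℝ) (t : ℝ) : ℝ≥0∞ :=
  rearrE μ (fun x => ENNReal.ofReal |f x|) t

/-- The measure `w·dm` on the set `I`. -/
noncomputable def wMeas (I : Set ℝ) (w : ℝ → ℝ) : Measure ℝ :=
  (volume.restrict I).withDensity (fun t => ENNReal.ofReal (w t))

/-- `W(t) = ∫₀ᵗ w dm`. -/
noncomputable def Wfun (w : ℝ → ℝ) (t : ℝ) : ℝ := ∫ s in Set.Ioo (0:ℝ) t, w s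

/-- `b = ∫_I w dm` as an extended real number. -/
noncomputable def bval (a : ℝ≥0∞) (w : ℝ → ℝ) : ℝ≥0∞ := ∫⁻ x in Iset a, ENNReal.ofReal (w x)

/-- The Köthe dual norm of the Lorentz space `Λ_{p,w}`:
`N(f) = sup { ∫_I |f·g| dm : ∫_I (g*)^p w dm ≤ 1 }`. -/
noncomputable def lorentzDualNorm (a : ℝ≥0∞) (w : ℝ → ℝ) (p : ℝ) (f : ℝ → ℝ) : ℝ≥0∞ :=
  sSup {c : ℝ≥0∞ | ∃ g : ℝ → ℝ, Measurable g ∧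
    (∫⁻ t in Iset a, rearr (volI a) g t ^ p * ENNReal.ofReal (w t)) ≤ 1 ∧
    c = ∫⁻ x in Iset a, ENNReal.ofReal |f x * g x|}

/-!
For every `g` with `f ≺ g`, the Hardy–Littlewood inequality, Hardy's lemma and the weighted Hölder
inequality give `∫ |f h| ≤ ∫ f* h* ≤ ∫ g* h* ≤ ‖g* w^(-1/p)‖_q ‖h‖_{Λ_{p,w}}`, so the dual norm
`N` is at most the infimum.

For the converse, perturb a truncation of `|f|` so that its level sets are null. The rank of its
values is then measure preserving, and composing a decreasing `h` with the rank yields a test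
function equimeasurable with `h`; in the limit `∫ f* h ≤ N ‖h‖_{L^p(w)}` for all decreasing `h`.
Now take the least concave majorant of `U = ∫ f*` as a function of `W = ∫ w`. With `x l` a maximiser
of `U - l W`, its slope `d` is the generalised inverse of `x`, and `g = w d` is decreasing with
`f ≺ g`. Since the majorant touches `U` wherever its slope changes, `∫ f* d^(q-1) = ∫ w d^q`, so
testing `N` on `h = d^(q-1)`, for which `∫ h^p w = ∫ w d^q`, gives `∫ g^q w^(1-q) = ∫ w d^q ≤ N^q`.
The slopes are first truncated to a compact range, which makes these integrals finite.
-/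

section Interval

theorem measurableSet_Iset (y : ℝ≥0∞) : MeasurableSet (Iset y) :=
  measurableSet_Ioi.inter (measurableSet_lt ENNReal.measurable_ofReal measurable_const)

theorem Iset_mono : Monotone Iset := fun _ _ h _ ht => ⟨ht.1, ht.2.trans_le h⟩

theorem Iset_inter_Iset (x y : ℝ≥0∞) : Iset x ∩ Iset y = Iset (min x y) := by
  ext t
  simp only [Iset, mem_inter_iff, mem_ofPred_eq, lt_min_iff]
  tauto

theorem Iset_zero : Iset 0 = ∅ := by
  ext t
  simp [Iset]

theorem Iset_top : Iset ⊤ = Ioi 0 := by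
  ext t
  simp [Iset]

theorem Iset_ofReal (x : ℝ) : Iset (ENNReal.ofReal x) = Ioo 0 x := by
  ext t
  exact and_congr_right fun ht => ENNReal.ofReal_lt_ofReal_iff_of_nonneg ht.le

theorem volume_Iset (y : ℝ≥0∞) : volume (Iset y) = y := by
  rcases eq_or_ne y ⊤ with rfl | hy
  · rw [Iset_top, Real.volume_Ioi]
  · lift y to NNReal using hy
    rw [← ENNReal.ofReal_coe_nnreal, Iset_ofReal, Real.volume_Ioo, sub_zero]

theorem ae_eq_Iset_volume {S : Set ℝ} (hpos : S ⊆ Ioi 0)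
    (hdown : ∀ s ∈ S, ∀ r, 0 < r → r ≤ s → r ∈ S) : S =ᵐ[volume] Iset (volume S) := by
  have hsub : Iset (volume S) ⊆ S := by
    intro t ht
    by_contra htS
    have hSt : S ⊆ Ioo 0 t :=
      fun s hs => ⟨hpos hs, lt_of_not_ge fun hts => htS (hdown s hs t ht.1 hts)⟩
    refine ht.2.not_ge ((measure_mono hSt).trans_eq ?_)
    rw [Real.volume_Ioo, sub_zero]
  have hdiff : S \ Iset (volume S) ⊆ {(volume S).toReal} := by
    rintro s ⟨hs, hsI⟩
    have hle : volume S ≤ ENNReal.ofReal s := not_lt.1 fun h => hsI ⟨hpos hs, h⟩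
    have hge : ENNReal.ofReal s ≤ volume S := by
      rw [← volume_Iset (ENNReal.ofReal s), Iset_ofReal]
      exact measure_mono fun r hr => hdown s hs r hr.1 hr.2.le
    rw [mem_singleton_iff, hle.antisymm hge, ENNReal.toReal_ofReal (le_of_lt (hpos hs))]
  refine EventuallyLE.antisymm ?_ hsub.eventuallyLE
  exact ae_le_set.2 (measure_mono_null hdiff Real.volume_singleton)

end Interval

section Tonelli

variable {α β : Type*} [MeasurableSpace α] [MeasurableSpace β]

theorem lintegral_mul_setLIntegral_swap (μ : Measure α) (ν : Measure β) [SFinite μ] [SFinite ν]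
    {R : Set (α × β)} (hR : MeasurableSet R) {u : α → ℝ≥0∞} {c : β → ℝ≥0∞}
    (hu : Measurable u) (hc : Measurable c) :
    ∫⁻ x, u x * ∫⁻ y in {y | (x, y) ∈ R}, c y ∂ν ∂μ =
      ∫⁻ y, c y * ∫⁻ x in {x | (x, y) ∈ R}, u x ∂μ ∂ν := by
  let k : α × β → ℝ≥0∞ := R.indicator fun z => u z.1 * c z.2
  have hk : Measurable k := ((hu.comp measurable_fst).mul (hc.comp measurable_snd)).indicator hR
  calc ∫⁻ x, u x * ∫⁻ y in {y | (x, y) ∈ R}, c y ∂ν ∂μ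
      = ∫⁻ x, ∫⁻ y, k (x, y) ∂ν ∂μ := by
        refine lintegral_congr fun x => ?_
        rw [← lintegral_const_mul _ hc]
        exact (lintegral_indicator (measurable_prodMk_left hR) _).symm
    _ = ∫⁻ y, ∫⁻ x, k (x, y) ∂μ ∂ν := lintegral_lintegral_swap hk.aemeasurable
    _ = ∫⁻ y, c y * ∫⁻ x in {x | (x, y) ∈ R}, u x ∂μ ∂ν := by
        refine lintegral_congr fun y => ?_
        rw [mul_comm, ← lintegral_mul_const _ hu]
        exact lintegral_indicator (measurable_prodMk_right hR) _

theorem lintegral_mul_eq_lintegral_superlevel (μ : Measure α) [SFinite μ] {u v : α → ℝ≥0∞}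
    (hu : Measurable u) (hv : Measurable v) :
    ∫⁻ x, u x * v x ∂μ =
      ∫⁻ s in Ioi (0 : ℝ), ∫⁻ x in {x | ENNReal.ofReal s < v x}, u x ∂μ := by
  have hR : MeasurableSet {z : α × ℝ | ENNReal.ofReal z.2 < v z.1} :=
    measurableSet_lt (by fun_prop) (by fun_prop)
  have hv_eq (x : α) :
      v x = ∫⁻ _ in {s : ℝ | ENNReal.ofReal s < v x}, 1 ∂volume.restrict (Ioi 0) := by
    have hmeas : MeasurableSet {s : ℝ | ENNReal.ofReal s < v x} :=
      measurableSet_lt (by fun_prop) (by fun_prop)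
    rw [setLIntegral_one, Measure.restrict_apply hmeas, inter_comm]
    exact (volume_Iset (v x)).symm
  calc ∫⁻ x, u x * v x ∂μ
      = ∫⁻ x, u x * ∫⁻ _ in {s : ℝ | ENNReal.ofReal s < v x}, 1 ∂volume.restrict (Ioi 0) ∂μ := by
        simp_rw [← hv_eq]
    _ = ∫⁻ s in Ioi (0 : ℝ), 1 * ∫⁻ x in {x | ENNReal.ofReal s < v x}, u x ∂μ :=
        lintegral_mul_setLIntegral_swap μ _ hR hu measurable_const
    _ = _ := by simp_rw [one_mul]

theorem lintegral_eq_lintegral_measure_superlevel (μ : Measure α) [SFinite μ] {v : α → ℝ≥0∞}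
    (hv : Measurable v) :
    ∫⁻ x, v x ∂μ = ∫⁻ s in Ioi (0 : ℝ), μ {x | ENNReal.ofReal s < v x} := by
  simpa using lintegral_mul_eq_lintegral_superlevel μ measurable_one hv

end Tonelli

/-- The primitive `y ↦ ∫₀ʸ u`, with the upper limit allowed to be `∞`. -/
noncomputable def primitive (u : ℝ → ℝ≥0∞) (y : ℝ≥0∞) : ℝ≥0∞ := ∫⁻ t in Iset y, u t

section Primitive

variable {u : ℝ → ℝ≥0∞}

theorem primitive_zero (u : ℝ → ℝ≥0∞) : primitive u 0 = 0 := by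
  rw [primitive, Iset_zero, Measure.restrict_empty, lintegral_zero_measure]

theorem primitive_ofReal (u : ℝ → ℝ≥0∞) (x : ℝ) :
    primitive u (ENNReal.ofReal x) = ∫⁻ t in Ioo 0 x, u t := by
  rw [primitive, Iset_ofReal]

theorem primitive_mono (u : ℝ → ℝ≥0∞) : Monotone (primitive u) :=
  fun _ _ h => lintegral_mono_set (Iset_mono h)

theorem primitive_top (u : ℝ → ℝ≥0∞) : primitive u ⊤ = ⨆ n : ℕ, primitive u n := by
  have hmono : Monotone fun n : ℕ => Iset (n : ℝ≥0∞) := Iset_mono.comp Nat.mono_cast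
  have hunion : Iset ⊤ = ⋃ n : ℕ, Iset (n : ℝ≥0∞) := by
    refine Subset.antisymm (fun t ht => ?_) (iUnion_subset fun n => Iset_mono le_top)
    obtain ⟨n, hn⟩ := ENNReal.exists_nat_gt ht.2.ne
    exact mem_iUnion.2 ⟨n, ht.1, hn⟩
  rw [primitive, hunion, setLIntegral_iUnion_of_directed _ hmono.directed_le]
  rfl

theorem primitive_eq_setLIntegral_indicator (u : ℝ → ℝ≥0∞) {x y : ℝ≥0∞} (hxy : x ≤ y) :
    primitive u x = ∫⁻ t in Iset y, (Iset x).indicator u t := by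
  rw [setLIntegral_indicator (measurableSet_Iset x),
    inter_eq_self_of_subset_left (Iset_mono hxy), primitive]

theorem continuousOn_primitive (hu : Measurable u) {X : ℝ≥0∞} (hX : primitive u X ≠ ⊤) :
    ContinuousOn (primitive u) (Iic X) := by
  intro x hx
  have hlim : Tendsto (fun y => ∫⁻ t in Iset X, (Iset y).indicator u t) (nhdsWithin x (Iic X))
      (nhds (∫⁻ t in Iset X, (Iset x).indicator u t)) := by
    refine tendsto_lintegral_filter_of_dominated_convergence u
      (Eventually.of_forall fun y => hu.indicator (measurableSet_Iset y))
      (Eventually.of_forall fun y => ae_of_all _ (indicator_le_self _ u)) hX ?_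
    filter_upwards [ae_restrict_of_ae (Measure.ae_ne volume x.toReal),
      ae_restrict_mem (measurableSet_Iset X)] with t htx htX
    have hne : ENNReal.ofReal t ≠ x := by
      rintro rfl
      exact htx (ENNReal.toReal_ofReal htX.1.le).symm
    refine tendsto_const_nhds.congr' ?_
    rcases hne.lt_or_gt with h | h
    · filter_upwards [nhdsWithin_le_nhds (lt_mem_nhds h)] with y hy
      rw [indicator_of_mem (show t ∈ Iset x from ⟨htX.1, h⟩),
        indicator_of_mem (show t ∈ Iset y from ⟨htX.1, hy⟩)]
    · filter_upwards [nhdsWithin_le_nhds (gt_mem_nhds h)] with y hy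
      rw [indicator_of_notMem (show t ∉ Iset x from fun ht => ht.2.not_gt h),
        indicator_of_notMem (show t ∉ Iset y from fun ht => ht.2.not_gt hy)]
  rw [ContinuousWithinAt, primitive_eq_setLIntegral_indicator u hx]
  refine hlim.congr' ?_
  filter_upwards [self_mem_nhdsWithin] with y hy
  exact (primitive_eq_setLIntegral_indicator u hy).symm

theorem primitive_lt_primitive (hu : Measurable u) {x y : ℝ≥0∞} (hxy : x < y)
    (hpos : ∀ t ∈ Iset y, 0 < u t) (hx : primitive u x ≠ ⊤) :
    primitive u x < primitive u y := by
  have hsub : Iset x ⊆ Iset y := Iset_mono hxy.le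
  have hm : MeasurableSet (Iset y \ Iset x) := (measurableSet_Iset y).diff (measurableSet_Iset x)
  have hgap : 0 < ∫⁻ t in Iset y \ Iset x, u t := by
    have hsupp : Iset y \ Iset x ⊆ Function.support u := fun t ht => (hpos t ht.1).ne'
    rw [setLIntegral_pos_iff hu, inter_eq_self_of_subset_right hsupp,
      measure_sdiff hsub (measurableSet_Iset x).nullMeasurableSet
        (by rw [volume_Iset]; exact hxy.ne_top), volume_Iset, volume_Iset]
    exact tsub_pos_of_lt hxy
  calc primitive u x < primitive u x + ∫⁻ t in Iset y \ Iset x, u t :=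
        ENNReal.lt_add_right hx hgap.ne'
    _ = primitive u y := by
        rw [primitive, ← lintegral_union hm disjoint_sdiff_right, union_sdiff_cancel hsub,
          primitive]

theorem primitive_ofReal_ne_top_of_antitoneOn {w : ℝ → ℝ} {a : ℝ≥0∞}
    (hanti : AntitoneOn w (Iset a))
    (hfin : ∀ t ∈ Iset a, ∫⁻ s in Ioo 0 t, ENNReal.ofReal (w s) ≠ ⊤) {y : ℝ≥0∞} (hya : y ≤ a)
    (hy : y ≠ ⊤) : primitive (fun s => ENNReal.ofReal (w s)) y ≠ ⊤ := by
  rcases eq_or_ne y 0 with rfl | h0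
  · simp [primitive_zero]
  set c := (y / 2).toReal
  have hhalf : y / 2 < y := ENNReal.half_lt_self h0 hy
  have hofc : ENNReal.ofReal c = y / 2 := ENNReal.ofReal_toReal hhalf.ne_top
  have hc : c ∈ Iset a :=
    ⟨ENNReal.toReal_pos (by simp [h0]) hhalf.ne_top, hofc ▸ hhalf.trans_le hya⟩
  have hsub : Iset y ⊆ Ioo 0 c ∪ (Iset y ∩ Ici c) := fun t ht =>
    (lt_or_ge t c).imp (fun h => ⟨ht.1, h⟩) fun h => ⟨ht, h⟩
  have hright : ∫⁻ s in Iset y ∩ Ici c, ENNReal.ofReal (w s) ≤ ENNReal.ofReal (w c) * y := by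
    calc ∫⁻ s in Iset y ∩ Ici c, ENNReal.ofReal (w s)
        ≤ ∫⁻ _ in Iset y ∩ Ici c, ENNReal.ofReal (w c) :=
          setLIntegral_mono measurable_const fun t ht =>
            ENNReal.ofReal_le_ofReal (hanti hc (Iset_mono hya ht.1) ht.2)
      _ ≤ ENNReal.ofReal (w c) * y := by
          rw [setLIntegral_const]
          gcongr
          exact (measure_mono inter_subset_left).trans_eq (volume_Iset y)
  refine ne_top_of_le_ne_top (ENNReal.add_ne_top.2 ⟨hfin c hc, ?_⟩)
    ((lintegral_mono_set hsub).trans (lintegral_union_le _ _ _))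
  exact ne_top_of_le_ne_top (ENNReal.mul_ne_top ENNReal.ofReal_ne_top hy) hright

theorem setLIntegral_Ioo_rpow {c : ℝ} (hc : 0 < c) {x : ℝ} (hx : 0 ≤ x) :
    ∫⁻ l in Ioo 0 x, ENNReal.ofReal (c * l ^ (c - 1)) = ENNReal.ofReal x ^ c := by
  have hint : IntervalIntegrable (fun l : ℝ => c * l ^ (c - 1)) volume 0 x :=
    (intervalIntegral.intervalIntegrable_rpow' (by linarith)).const_mul c
  have hnonneg : 0 ≤ᵐ[volume.restrict (Ioc 0 x)] fun l : ℝ => c * l ^ (c - 1) := by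
    filter_upwards [ae_restrict_mem measurableSet_Ioc] with l hl
    have := hl.1
    simp only [Pi.zero_apply]
    positivity
  rw [restrict_Ioo_eq_restrict_Ioc, ← ofReal_integral_eq_lintegral_ofReal
    ((intervalIntegrable_iff_integrableOn_Ioc_of_le hx).1 hint) hnonneg,
    ← intervalIntegral.integral_of_le hx, intervalIntegral.integral_const_mul,
    integral_rpow (Or.inl (by linarith)), ENNReal.ofReal_rpow_of_nonneg hx hc.le, sub_add_cancel,
    Real.zero_rpow hc.ne', sub_zero, mul_div_cancel₀ _ hc.ne']

theorem primitive_rpow {c : ℝ} (hc : 0 < c) (y : ℝ≥0∞) :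
    primitive (fun l => ENNReal.ofReal (c * l ^ (c - 1))) y = y ^ c := by
  have hfin (x : ℝ) (hx : 0 ≤ x) :
      primitive (fun l => ENNReal.ofReal (c * l ^ (c - 1))) (ENNReal.ofReal x) =
        ENNReal.ofReal x ^ c := by
    rw [primitive_ofReal, setLIntegral_Ioo_rpow hc hx]
  rcases eq_or_ne y ⊤ with rfl | hy
  · refine (ENNReal.top_rpow_of_pos hc).symm ▸ ENNReal.eq_top_of_forall_nnreal_le fun r => ?_
    calc (r : ℝ≥0∞) = ENNReal.ofReal (r ^ c⁻¹ : ℝ) ^ c := by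
          rw [ENNReal.ofReal_rpow_of_nonneg (by positivity) hc.le,
            Real.rpow_inv_rpow r.coe_nonneg hc.ne', ENNReal.ofReal_coe_nnreal]
      _ ≤ primitive (fun l => ENNReal.ofReal (c * l ^ (c - 1))) ⊤ := by
          rw [← hfin _ (by positivity)]
          exact primitive_mono _ le_top
  · rw [← ENNReal.ofReal_toReal hy, hfin _ ENNReal.toReal_nonneg]

end Primitive

section Rearrangement

variable (μ : Measure ℝ) {f g : ℝ → ℝ≥0∞}

theorem exists_gt_lt_measure_superlevel {s c : ℝ≥0∞} (h : c < μ {x | s < f x}) :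
    ∃ s' > s, c < μ {x | s' < f x} := by
  have hs : s < ⊤ := lt_top_iff_ne_top.2 fun hs => by simp [hs] at h
  obtain ⟨u, hanti, hmem, hlim⟩ := exists_seq_strictAnti_tendsto' hs
  have hunion : {x | s < f x} = ⋃ n, {x | u n < f x} := by
    ext x
    simp only [mem_ofPred_eq, mem_iUnion]
    exact ⟨fun hx => (hlim.eventually_lt_const hx).exists, fun ⟨n, hn⟩ => (hmem n).1.trans hn⟩
  have hmono : Monotone fun n => {x | u n < f x} :=
    fun _ _ hmn _ hx => (hanti.antitone hmn).trans_lt hx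
  rw [hunion, hmono.measure_iUnion] at h
  obtain ⟨n, hn⟩ := lt_iSup_iff.1 h
  exact ⟨u n, (hmem n).1, hn⟩

theorem lt_rearrE_iff {s : ℝ≥0∞} {t : ℝ} :
    s < rearrE μ f t ↔ ENNReal.ofReal t < μ {x | s < f x} := by
  refine ⟨fun h => ?_, fun h => ?_⟩
  · obtain ⟨r, hsr, hr⟩ := exists_between h
    refine (lt_of_not_ge fun hle => hr.not_ge (sInf_le ⟨pos_of_gt hsr, hle⟩)).trans_le ?_
    exact measure_mono fun x hx => hsr.trans hx
  · obtain ⟨s', hs, hs'⟩ := exists_gt_lt_measure_superlevel μ h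
    refine hs.trans_le (le_sInf fun r hr => le_of_not_gt fun hrs => ?_)
    exact hs'.not_ge ((measure_mono fun x (hx : s' < f x) => hrs.trans hx).trans hr.2)

theorem antitone_rearrE (f : ℝ → ℝ≥0∞) : Antitone (rearrE μ f) :=
  fun _ _ h => sInf_le_sInf fun _ hs => ⟨hs.1, hs.2.trans (ENNReal.ofReal_le_ofReal h)⟩

theorem measurable_rearrE (f : ℝ → ℝ≥0∞) : Measurable (rearrE μ f) :=
  (antitone_rearrE μ f).measurable

theorem rearrE_mono (h : f ≤ g) (t : ℝ) : rearrE μ f t ≤ rearrE μ g t :=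
  sInf_le_sInf fun _ hs => ⟨hs.1, (measure_mono fun x hx => hx.trans_le (h x)).trans hs.2⟩

theorem rearrE_iSup {f : ℕ → ℝ → ℝ≥0∞} (hf : Monotone f) (t : ℝ) :
    rearrE μ (fun x => ⨆ n, f n x) t = ⨆ n, rearrE μ (f n) t := by
  refine eq_of_forall_lt_iff fun s => ?_
  have hmono : Monotone fun n => {x | s < f n x} := fun _ _ h x hx => hx.trans_le (hf h x)
  have hunion : {x | s < ⨆ n, f n x} = ⋃ n, {x | s < f n x} := by
    ext x
    simp [lt_iSup_iff]
  simp_rw [lt_rearrE_iff, hunion, hmono.measure_iUnion, lt_iSup_iff, lt_rearrE_iff]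

theorem rearrE_congr_ae (h : f =ᵐ[μ] g) : rearrE μ f = rearrE μ g := by
  funext t
  refine eq_of_forall_lt_iff fun s => ?_
  rw [lt_rearrE_iff, lt_rearrE_iff, measure_congr]
  filter_upwards [h] with x hx
  exact congrArg (s < ·) hx

theorem primitive_rearrE (f : ℝ → ℝ≥0∞) (y : ℝ≥0∞) :
    primitive (rearrE μ f) y =
      ∫⁻ s in Ioi (0 : ℝ), min y (μ {x | ENNReal.ofReal s < f x}) := by
  rw [primitive, lintegral_eq_lintegral_measure_superlevel _ (measurable_rearrE μ f)]
  refine lintegral_congr fun s => ?_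
  rw [Measure.restrict_apply (measurableSet_lt measurable_const (measurable_rearrE μ f)),
    ← volume_Iset (min y _), ← Iset_inter_Iset, inter_comm]
  congr 1
  ext t
  simp only [mem_inter_iff, mem_ofPred_eq, lt_rearrE_iff, Iset]
  tauto

theorem rearrE_eq_zero {t : ℝ} (ht : μ {x | 0 < f x} ≤ ENNReal.ofReal t) : rearrE μ f t = 0 :=
  nonpos_iff_eq_zero.1 (not_lt.1 fun h => ((lt_rearrE_iff μ).1 h).not_ge ht)

theorem setLIntegral_rearrE_mul (h : ℝ → ℝ≥0∞) {a : ℝ≥0∞} (ha : μ {x | 0 < f x} ≤ a)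
    (y : ℝ≥0∞) :
    ∫⁻ t in Iset y, rearrE μ f t * h t = ∫⁻ t in Iset (min y a), rearrE μ f t * h t := by
  rw [← Iset_inter_Iset, inter_comm, ← setLIntegral_indicator (measurableSet_Iset a)]
  refine setLIntegral_congr_fun (measurableSet_Iset y) fun t ht => ?_
  by_cases hta : t ∈ Iset a
  · rw [indicator_of_mem hta]
  · rw [indicator_of_notMem hta,
      rearrE_eq_zero μ (ha.trans (not_lt.1 fun h => hta ⟨ht.1, h⟩)), zero_mul]

variable [SFinite μ]

theorem setLIntegral_le_primitive_rearrE (hf : Measurable f) (E : Set ℝ) :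
    ∫⁻ x in E, f x ∂μ ≤ primitive (rearrE μ f) (μ E) := by
  rw [primitive_rearrE, lintegral_eq_lintegral_measure_superlevel _ hf]
  refine lintegral_mono fun s => ?_
  rw [Measure.restrict_apply (measurableSet_lt measurable_const hf)]
  exact le_min (measure_mono inter_subset_right) (measure_mono inter_subset_left)

/-- The Hardy–Littlewood inequality followed by Hardy's lemma. -/
theorem lintegral_mul_le_lintegral_rearrE_mul {v : ℝ → ℝ≥0∞} (hf : Measurable f)
    (hg : Measurable g) (hv : Measurable v)
    (hfv : ∀ x : ℝ, 0 < x → ∫⁻ t in Ioo 0 x, rearrE μ f t ≤ ∫⁻ t in Ioo 0 x, v t) :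
    ∫⁻ x, f x * g x ∂μ ≤ ∫⁻ t in Ioi (0 : ℝ), v t * rearrE μ g t := by
  have hprim (y : ℝ≥0∞) (hy : y ≠ ⊤) : primitive (rearrE μ f) y ≤ primitive v y := by
    rcases eq_or_ne y 0 with rfl | h0
    · simp [primitive_zero]
    · rw [← ENNReal.ofReal_toReal hy, primitive_ofReal, primitive_ofReal]
      exact hfv _ (ENNReal.toReal_pos h0 hy)
  have hprim_le (y : ℝ≥0∞) : primitive (rearrE μ f) y ≤ primitive v y := by
    rcases eq_or_ne y ⊤ with rfl | hy
    · rw [primitive_top, primitive_top]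
      exact iSup_mono fun n => hprim n (ENNReal.natCast_ne_top n)
    · exact hprim y hy
  rw [lintegral_mul_eq_lintegral_superlevel _ hf hg,
    lintegral_mul_eq_lintegral_superlevel _ hv (measurable_rearrE μ g)]
  refine lintegral_mono fun s => ?_
  refine (setLIntegral_le_primitive_rearrE μ hf _).trans ((hprim_le _).trans ?_)
  rw [Measure.restrict_restrict (measurableSet_lt measurable_const (measurable_rearrE μ g))]
  exact lintegral_mono_set fun t ht => ⟨(lt_rearrE_iff μ).2 ht.2, ht.1⟩

end Rearrangement

section IntervalMeasure

variable {a : ℝ≥0∞}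

instance (a : ℝ≥0∞) : SFinite (volI a) := by
  unfold volI
  infer_instance

theorem volI_apply_le (a : ℝ≥0∞) (S : Set ℝ) : volI a S ≤ a := by
  refine (measure_mono (subset_univ S)).trans_eq ?_
  rw [volI, Measure.restrict_apply_univ, volume_Iset]

theorem rearrE_volI_le_of_antitoneOn {v : ℝ → ℝ≥0∞} (hv : AntitoneOn v (Iset a)) {t : ℝ}
    (ht : t ∈ Iset a) : rearrE (volI a) v t ≤ v t := by
  refine le_of_forall_lt fun s hs => lt_of_not_ge fun hle => ?_
  refine ((lt_rearrE_iff _).1 hs).not_ge ?_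
  have hsub : {x | s < v x} ∩ Iset a ⊆ Ioo 0 t := fun x hx =>
    ⟨hx.2.1, lt_of_not_ge fun htx => (hx.1.trans_le (hv ht hx.2 htx)).not_ge hle⟩
  rw [volI, Measure.restrict_apply₀' (measurableSet_Iset a).nullMeasurableSet]
  refine (measure_mono hsub).trans_eq ?_
  rw [Real.volume_Ioo, sub_zero]

end IntervalMeasure

section Holder

theorem lintegral_mul_le_weighted_Lp_mul_Lq {α : Type*} [MeasurableSpace α] {μ : Measure α}
    {p q : ℝ} (hpq : p.HolderConjugate q) {u h v : α → ℝ≥0∞} (hu : AEMeasurable u μ)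
    (hh : AEMeasurable h μ) (hv : AEMeasurable v μ) (hv0 : ∀ᵐ x ∂μ, v x ≠ 0)
    (hvt : ∀ᵐ x ∂μ, v x ≠ ⊤) :
    ∫⁻ x, u x * h x ∂μ ≤
      (∫⁻ x, u x ^ q * v x ^ (1 - q) ∂μ) ^ (1 / q) * (∫⁻ x, h x ^ p * v x ∂μ) ^ (1 / p) := by
  have hexp : -(1 / p) * q = 1 - q := by
    rw [neg_mul, one_div_mul_eq_div, hpq.symm.div_conj_eq_sub_one, neg_sub]
  have hsplit : ∫⁻ x, u x * h x ∂μ =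
      ∫⁻ x, ((fun x => u x * v x ^ (-(1 / p))) * fun x => h x * v x ^ (1 / p)) x ∂μ := by
    refine lintegral_congr_ae ?_
    filter_upwards [hv0, hvt] with x h0 ht
    rw [Pi.mul_apply, mul_mul_mul_comm, ← ENNReal.rpow_add _ _ h0 ht, neg_add_cancel,
      ENNReal.rpow_zero, mul_one]
  rw [hsplit]
  refine (ENNReal.lintegral_mul_le_Lp_mul_Lq μ hpq.symm (hu.mul (hv.pow_const _))
    (hh.mul (hv.pow_const _))).trans_eq ?_
  simp only [Pi.mul_apply, ENNReal.mul_rpow_of_nonneg _ _ hpq.symm.nonneg,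
    ENNReal.mul_rpow_of_nonneg _ _ hpq.nonneg, ← ENNReal.rpow_mul, hexp,
    one_div_mul_cancel hpq.ne_zero, ENNReal.rpow_one]

end Holder

section Resonance

variable {μ : Measure ℝ} {k : ℝ → ℝ≥0∞}

theorem le_measure_le_of_forall_lt (hk : Measurable k) (hfin : μ {x | 0 < k x} ≠ ⊤)
    {r c : ℝ≥0∞} (hr : 0 < r) (h : ∀ s < r, c ≤ μ {x | s < k x}) : c ≤ μ {x | r ≤ k x} := by
  obtain ⟨u, hmono, hmem, hlim⟩ := exists_seq_strictMono_tendsto' hr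
  have hinter : {x | r ≤ k x} = ⋂ n, {x | u n < k x} := by
    ext x
    simp only [mem_ofPred_eq, mem_iInter]
    exact ⟨fun hx n => (hmem n).2.trans_le hx, fun hx => le_of_tendsto' hlim fun n => (hx n).le⟩
  have hanti : Antitone fun n => {x | u n < k x} :=
    fun _ _ hmn _ hx => (hmono.monotone hmn).trans_lt hx
  rw [hinter, hanti.measure_iInter
    (fun n => (measurableSet_lt measurable_const hk).nullMeasurableSet)
    ⟨0, ne_top_of_le_ne_top hfin (measure_mono fun x hx => (hmem 0).1.trans hx)⟩]
  exact le_iInf fun n => h _ (hmem n).2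

theorem measure_rank_le (hk : Measurable k) (hfin : μ {x | 0 < k x} ≠ ⊤)
    (hties : ∀ s, 0 < s → μ {x | k x = s} = 0) (t : ℝ) :
    μ {x | 0 < k x ∧ μ {y | k x < k y} ≤ ENNReal.ofReal t} =
      min (ENNReal.ofReal t) (μ {x | 0 < k x}) := by
  have hset : {x | 0 < k x ∧ μ {y | k x < k y} ≤ ENNReal.ofReal t} =
      {x | 0 < k x ∧ rearrE μ k t ≤ k x} := by
    ext x
    simp only [mem_ofPred_eq, ← not_lt, lt_rearrE_iff]
  rw [hset]
  rcases eq_zero_or_pos (rearrE μ k t) with hr | hr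
  · have hle : μ {x | 0 < k x} ≤ ENNReal.ofReal t :=
      not_lt.1 fun h => ((lt_rearrE_iff μ).2 h).ne' hr
    simp [hr, hle]
  · have hset' : {x | 0 < k x ∧ rearrE μ k t ≤ k x} = {x | rearrE μ k t ≤ k x} :=
      ext fun x => and_iff_right_of_imp hr.trans_le
    rw [hset', min_eq_left ((lt_rearrE_iff μ).1 hr).le]
    refine le_antisymm ?_ (le_measure_le_of_forall_lt hk hfin hr
      fun s hs => ((lt_rearrE_iff μ).1 hs).le)
    calc μ {x | rearrE μ k t ≤ k x}
        ≤ μ {x | rearrE μ k t < k x} + μ {x | k x = rearrE μ k t} :=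
          (measure_mono fun x (hx : _ ≤ k x) => hx.lt_or_eq.imp_right Eq.symm).trans
            (measure_union_le _ _)
      _ ≤ ENNReal.ofReal t := by
          rw [hties _ hr, add_zero]
          exact not_lt.1 fun h => lt_irrefl _ ((lt_rearrE_iff μ).2 h)

/-- The rank of `x` among the values of `k`: the measure of the set where `k` exceeds `k x`.
When the level sets of `k` are null, `k` is its rearrangement composed with the rank, which is
measure preserving. -/
noncomputable def rank (μ : Measure ℝ) (k : ℝ → ℝ≥0∞) (x : ℝ) : ℝ := (μ {y | k x < k y}).toReal

theorem measurable_rank (hk : Measurable k) : Measurable (rank μ k) := by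
  have hanti : Antitone fun s => μ {y | s < k y} :=
    fun _ _ h => measure_mono fun _ hy => h.trans_lt hy
  exact (hanti.measurable.comp hk).ennreal_toReal

theorem ofReal_rank (hfin : μ {x | 0 < k x} ≠ ⊤) (x : ℝ) :
    ENNReal.ofReal (rank μ k x) = μ {y | k x < k y} :=
  ENNReal.ofReal_toReal <|
    ne_top_of_le_ne_top hfin (measure_mono fun _ hy => pos_of_gt (mem_ofPred.1 hy))

theorem rearrE_rank_le (hfin : μ {x | 0 < k x} ≠ ⊤) (x : ℝ) : rearrE μ k (rank μ k x) ≤ k x :=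
  not_lt.1 fun h => ((lt_rearrE_iff μ).1 h).ne (ofReal_rank hfin x)

theorem map_rank (hk : Measurable k) (hfin : μ {x | 0 < k x} ≠ ⊤)
    (hties : ∀ s, 0 < s → μ {x | k x = s} = 0) :
    (μ.restrict {x | 0 < k x}).map (rank μ k) = volume.restrict (Iset (μ {x | 0 < k x})) := by
  have : Fact (μ {x | 0 < k x} < ⊤) := ⟨hfin.lt_top⟩
  refine Measure.ext_of_Iic _ _ fun t => ?_
  have hvol : volume (Iic t ∩ Iset (μ {x | 0 < k x})) =
      min (ENNReal.ofReal t) (μ {x | 0 < k x}) := by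
    rw [measure_congr (Iio_ae_eq_Iic.symm.inter (ae_eq_refl (Iset (μ {x | 0 < k x})))),
      ← volume_Iset (min _ _), ← Iset_inter_Iset, Iset_ofReal]
    congr 1
    ext s
    simp only [mem_inter_iff, mem_Iio, mem_Ioo, Iset, mem_ofPred_eq]
    tauto
  rw [Measure.map_apply (measurable_rank hk) measurableSet_Iic,
    Measure.restrict_apply (measurable_rank hk measurableSet_Iic),
    Measure.restrict_apply measurableSet_Iic, hvol]
  rcases le_or_gt 0 t with ht | ht
  · rw [← measure_rank_le hk hfin hties]
    congr 1
    ext x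
    simp only [mem_inter_iff, mem_preimage, mem_Iic, mem_ofPred_eq, ← ofReal_rank hfin,
      ENNReal.ofReal_le_ofReal_iff ht, and_comm]
  · have hempty : rank μ k ⁻¹' Iic t = ∅ :=
      eq_empty_of_forall_notMem fun x hx => (hx.trans_lt ht).not_ge ENNReal.toReal_nonneg
    rw [hempty, empty_inter, measure_empty, ENNReal.ofReal_of_nonpos ht.le, zero_min]

theorem rearrE_le_of_comp_rank (hk : Measurable k) (hfin : μ {x | 0 < k x} ≠ ⊤)
    (hties : ∀ s, 0 < s → μ {x | k x = s} = 0) {h : ℝ → ℝ≥0∞} (hh : Antitone h) (t : ℝ) :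
    rearrE μ ({x | 0 < k x}.indicator fun x => h (rank μ k x)) t ≤ h t := by
  refine le_of_forall_lt fun s hs => lt_of_not_ge fun hle => ?_
  refine ((lt_rearrE_iff μ).1 hs).not_ge ?_
  have hsub : {x | s < {x | 0 < k x}.indicator (fun x => h (rank μ k x)) x} ⊆
      rank μ k ⁻¹' Iio t ∩ {x | 0 < k x} := by
    intro x hx
    have hxk : x ∈ {x | 0 < k x} := mem_of_indicator_ne_zero (pos_of_gt (mem_ofPred.1 hx)).ne'
    rw [mem_ofPred_eq, indicator_of_mem hxk] at hx
    exact ⟨lt_of_not_ge fun htx => (hx.trans_le (hh htx)).not_ge hle, hxk⟩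
  calc μ {x | s < {x | 0 < k x}.indicator (fun x => h (rank μ k x)) x}
      ≤ (μ.restrict {x | 0 < k x}).map (rank μ k) (Iio t) := by
        rw [Measure.map_apply (measurable_rank hk) measurableSet_Iio,
          Measure.restrict_apply (measurable_rank hk measurableSet_Iio)]
        exact measure_mono hsub
    _ ≤ volume (Ioo 0 t) := by
        rw [map_rank hk hfin hties, Measure.restrict_apply measurableSet_Iio]
        exact measure_mono fun x hx => ⟨hx.2.1, hx.1⟩
    _ = ENNReal.ofReal t := by rw [Real.volume_Ioo, sub_zero]

theorem setLIntegral_rearrE_mul_le_of_comp_rank (hk : Measurable k)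
    (hfin : μ {x | 0 < k x} ≠ ⊤) (hties : ∀ s, 0 < s → μ {x | k x = s} = 0)
    {h : ℝ → ℝ≥0∞} (hh : Measurable h) :
    ∫⁻ t in Ioi (0 : ℝ), rearrE μ k t * h t ≤
      ∫⁻ x, k x * {x | 0 < k x}.indicator (fun x => h (rank μ k x)) x ∂μ := by
  have hpos : MeasurableSet {x | 0 < k x} := measurableSet_lt measurable_const hk
  calc ∫⁻ t in Ioi (0 : ℝ), rearrE μ k t * h t
      = ∫⁻ t in Iset (μ {x | 0 < k x}), rearrE μ k t * h t :=
        by rw [← Iset_top, setLIntegral_rearrE_mul μ h le_rfl, min_top_left]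
    _ = ∫⁻ x in {x | 0 < k x}, rearrE μ k (rank μ k x) * h (rank μ k x) ∂μ := by
        rw [← map_rank hk hfin hties]
        exact lintegral_map ((measurable_rearrE μ k).mul hh) (measurable_rank hk)
    _ ≤ ∫⁻ x in {x | 0 < k x}, k x * h (rank μ k x) ∂μ :=
        lintegral_mono fun x => mul_le_mul_left (rearrE_rank_le hfin x) _
    _ = ∫⁻ x, k x * {x | 0 < k x}.indicator (fun x => h (rank μ k x)) x ∂μ := by
        rw [← lintegral_indicator hpos]
        simp_rw [indicator_mul_right]

theorem countable_setOf_slope_measure_pos (μ : Measure ℝ) [SFinite μ] [NullSingletonClass μ]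
    {φ : ℝ → ℝ} (hφ : Measurable φ) : {m : ℝ | ∃ c, 0 < μ {x | φ x = m * x + c}}.Countable := by
  have hcount : {i : ℝ × ℝ | 0 < μ {x | φ x = i.1 * x + i.2}}.Countable := by
    refine Measure.countable_meas_pos_of_disjoint_iUnion₀
      (fun i => (measurableSet_eq_fun hφ (by fun_prop)).nullMeasurableSet) fun i j hij => ?_
    refine Subsingleton.measure_zero (fun x hx y hy => ?_) μ
    have hxi : φ x = i.1 * x + i.2 := hx.1
    have hxj : φ x = j.1 * x + j.2 := hx.2
    have hyi : φ y = i.1 * y + i.2 := hy.1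
    have hyj : φ y = j.1 * y + j.2 := hy.2
    have hslope : i.1 ≠ j.1 := fun h => hij (Prod.ext h (by rw [h] at hxi; linarith))
    exact mul_left_cancel₀ (sub_ne_zero.2 hslope) (by linarith)
  refine (hcount.image Prod.fst).mono ?_
  rintro m ⟨c, hc⟩
  exact ⟨(m, c), hc, rfl⟩

end Resonance

section DualNorm

variable {a : ℝ≥0∞}

instance (a : ℝ≥0∞) : NullSingletonClass (volI a) := by
  unfold volI
  infer_instance

/-- The truncation to `(0, n)` of `|f|` damped by `x ↦ exp (-ε x)`. For all but countably many
rates `ε` its level sets are null. -/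
noncomputable def damp (f : ℝ → ℝ) (n : ℕ) (ε x : ℝ) : ℝ≥0∞ :=
  (Iset n).indicator (fun x => ENNReal.ofReal (|f x| * Real.exp (-ε * x))) x

theorem measurable_damp {f : ℝ → ℝ} (hf : Measurable f) (n : ℕ) (ε : ℝ) :
    Measurable (damp f n ε) :=
  Measurable.indicator (by fun_prop) (measurableSet_Iset _)

theorem damp_le_damp (f : ℝ → ℝ) {m n : ℕ} (hmn : m ≤ n) {ε δ : ℝ} (hεδ : δ ≤ ε) (x : ℝ) :
    damp f m ε x ≤ damp f n δ x := by
  refine indicator_le (fun x hx => ?_) x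
  have hpos : 0 < x := hx.1
  rw [damp, indicator_of_mem (Iset_mono (Nat.cast_le.2 hmn) hx)]
  gcongr

theorem damp_le (f : ℝ → ℝ) (n : ℕ) {ε : ℝ} (hε : 0 ≤ ε) (x : ℝ) :
    damp f n ε x ≤ ENNReal.ofReal |f x| := by
  refine indicator_le (g := fun x => ENNReal.ofReal |f x|)
    (fun x hx => ENNReal.ofReal_le_ofReal ?_) x
  refine mul_le_of_le_one_right (abs_nonneg _) (Real.exp_le_one_iff.2 ?_)
  exact mul_nonpos_of_nonpos_of_nonneg (neg_nonpos.2 hε) hx.1.le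

theorem volI_damp_pos_ne_top (a : ℝ≥0∞) (f : ℝ → ℝ) (n : ℕ) (ε : ℝ) :
    volI a {x | 0 < damp f n ε x} ≠ ⊤ := by
  have hsub : {x | 0 < damp f n ε x} ⊆ Iset n :=
    fun x hx => mem_of_indicator_ne_zero (mem_ofPred.1 hx).ne'
  refine ne_top_of_le_ne_top (ENNReal.natCast_ne_top n)
    ((Measure.restrict_apply_le _ _).trans ((measure_mono hsub).trans_eq (volume_Iset n)))

theorem tendsto_damp (f : ℝ → ℝ) {ε : ℕ → ℝ} (hε : Tendsto ε atTop (nhds 0)) {x : ℝ}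
    (hx : 0 < x) : Tendsto (fun n => damp f n (ε n) x) atTop (nhds (ENNReal.ofReal |f x|)) := by
  have hlim : Tendsto (fun n => ENNReal.ofReal (|f x| * Real.exp (-ε n * x))) atTop
      (nhds (ENNReal.ofReal |f x|)) := by
    refine ENNReal.tendsto_ofReal ?_
    have hexp : Tendsto (fun n => Real.exp (-ε n * x)) atTop (nhds 1) := by
      simpa [Function.comp_def] using
        (Real.continuous_exp.tendsto _).comp (hε.neg.mul_const x)
    simpa using hexp.const_mul |f x|
  refine hlim.congr' ?_
  filter_upwards [eventually_gt_atTop ⌈x⌉₊] with n hn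
  have hxn : ENNReal.ofReal x < n :=
    (ENNReal.ofReal_lt_natCast (Nat.ne_zero_of_lt hn)).2 (Nat.lt_of_ceil_lt hn)
  rw [damp, indicator_of_mem (show x ∈ Iset n from ⟨hx, hxn⟩)]

theorem setOf_damp_eq_subset (f : ℝ → ℝ) (n : ℕ) (ε : ℝ) {s : ℝ≥0∞} (hs : 0 < s) :
    {x | damp f n ε x = s} ⊆ {x | Real.log |f x| = ε * x + Real.log s.toReal} := by
  intro x hx
  have hxs : damp f n ε x = s := hx
  have hxn : x ∈ Iset n := mem_of_indicator_ne_zero (hxs.trans_ne hs.ne')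
  rw [damp, indicator_of_mem hxn] at hxs
  have hpos : 0 < |f x| * Real.exp (-ε * x) := ENNReal.ofReal_pos.1 (hxs ▸ hs)
  have hf0 : |f x| ≠ 0 := left_ne_zero_of_mul hpos.ne'
  rw [mem_ofPred_eq, ← hxs, ENNReal.toReal_ofReal hpos.le, Real.log_mul hf0 (Real.exp_ne_zero _),
    Real.log_exp]
  ring

theorem exists_seq_damp_noTies (a : ℝ≥0∞) {f : ℝ → ℝ} (hf : Measurable f) :
    ∃ ε : ℕ → ℝ, Antitone ε ∧ (∀ n, 0 < ε n) ∧ Tendsto ε atTop (nhds 0) ∧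
      ∀ n s, 0 < s → volI a {x | damp f n (ε n) x = s} = 0 := by
  have hcount := countable_setOf_slope_measure_pos (volI a) (φ := fun x => Real.log |f x|)
    (by fun_prop)
  obtain ⟨ε, hanti, hmem, hlim⟩ := (hcount.dense_compl ℝ).exists_seq_strictAnti_tendsto 0
  refine ⟨ε, hanti.antitone, fun n => (hmem n).1, hlim, fun n s hs => ?_⟩
  refine measure_mono_null (setOf_damp_eq_subset f n (ε n) hs) ?_
  by_contra h
  exact (hmem n).2 ⟨_, pos_iff_ne_zero.2 h⟩

theorem lintegral_mul_le_lorentzDualNorm {w : ℝ → ℝ} {p : ℝ} {f g : ℝ → ℝ} (hg : Measurable g)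
    (hg1 : ∫⁻ t in Iset a, rearr (volI a) g t ^ p * ENNReal.ofReal (w t) ≤ 1) :
    ∫⁻ x, ENNReal.ofReal |f x| * ENNReal.ofReal |g x| ∂volI a ≤ lorentzDualNorm a w p f := by
  simp_rw [← ENNReal.ofReal_mul (abs_nonneg _), ← abs_mul]
  exact le_sSup ⟨g, hg, hg1, rfl⟩

theorem setLIntegral_rearrE_mul_le_lorentzDualNorm_of_noTies {w : ℝ → ℝ} {p : ℝ} (hp : 0 ≤ p)
    {f : ℝ → ℝ} {k : ℝ → ℝ≥0∞} (hk : Measurable k) (hkf : ∀ x, k x ≤ ENNReal.ofReal |f x|)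
    (hfin : volI a {x | 0 < k x} ≠ ⊤) (hties : ∀ s, 0 < s → volI a {x | k x = s} = 0)
    {h : ℝ → ℝ≥0∞} (hh : Antitone h) (hh_top : ∀ t, h t ≠ ⊤)
    (hh1 : ∫⁻ t in Iset a, h t ^ p * ENNReal.ofReal (w t) ≤ 1) :
    ∫⁻ t in Iset a, rearrE (volI a) k t * h t ≤ lorentzDualNorm a w p f := by
  set G : ℝ → ℝ≥0∞ := {x | 0 < k x}.indicator fun x => h (rank (volI a) k x)
  have hGmeas : Measurable G :=
    (hh.measurable.comp (measurable_rank hk)).indicator (measurableSet_lt measurable_const hk)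
  have hG (x : ℝ) : ENNReal.ofReal |(G x).toReal| = G x := by
    have hG_top : G x ≠ ⊤ := by
      rcases indicator_eq_zero_or_self {x | 0 < k x} (fun x => h (rank (volI a) k x)) x with hx | hx
      · exact hx.trans_ne ENNReal.zero_ne_top
      · exact hx.trans_ne (hh_top _)
    rw [abs_of_nonneg ENNReal.toReal_nonneg, ENNReal.ofReal_toReal hG_top]
  have hG1 : ∫⁻ t in Iset a, rearr (volI a) (fun x => (G x).toReal) t ^ p *
      ENNReal.ofReal (w t) ≤ 1 := by
    refine (lintegral_mono fun t => ?_).trans hh1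
    simp only [rearr, hG]
    gcongr
    exact rearrE_le_of_comp_rank hk hfin hties hh t
  calc ∫⁻ t in Iset a, rearrE (volI a) k t * h t
      ≤ ∫⁻ t in Ioi (0 : ℝ), rearrE (volI a) k t * h t := lintegral_mono_set fun t ht => ht.1
    _ ≤ ∫⁻ x, k x * G x ∂volI a :=
        setLIntegral_rearrE_mul_le_of_comp_rank hk hfin hties hh.measurable
    _ ≤ ∫⁻ x, ENNReal.ofReal |f x| * ENNReal.ofReal |(G x).toReal| ∂volI a := by
        refine lintegral_mono fun x => ?_
        rw [hG]
        exact mul_le_mul_left (hkf x) _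
    _ ≤ lorentzDualNorm a w p f := lintegral_mul_le_lorentzDualNorm hGmeas.ennreal_toReal hG1

theorem setLIntegral_rearr_mul_le_lorentzDualNorm {w : ℝ → ℝ} {p : ℝ} (hp : 0 ≤ p)
    {f : ℝ → ℝ} (hf : Measurable f) {h : ℝ → ℝ≥0∞} (hh : Antitone h) (hh_top : ∀ t, h t ≠ ⊤)
    (hh1 : ∫⁻ t in Iset a, h t ^ p * ENNReal.ofReal (w t) ≤ 1) :
    ∫⁻ t in Iset a, rearr (volI a) f t * h t ≤ lorentzDualNorm a w p f := by
  obtain ⟨ε, hε, hε_pos, hε_lim, hties⟩ := exists_seq_damp_noTies a hf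
  have hmono : Monotone fun n => damp f n (ε n) := fun m n hmn => damp_le_damp f hmn (hε hmn)
  have hrearr (t : ℝ) : rearr (volI a) f t = ⨆ n, rearrE (volI a) (damp f n (ε n)) t := by
    rw [rearr, ← rearrE_iSup _ hmono]
    refine congrFun (rearrE_congr_ae _ ?_) t
    filter_upwards [ae_restrict_mem (measurableSet_Iset a)] with x hx
    exact (iSup_eq_of_tendsto (fun m n hmn => hmono hmn x) (tendsto_damp f hε_lim hx.1)).symm
  have hmeas (n : ℕ) : Measurable fun t => rearrE (volI a) (damp f n (ε n)) t * h t :=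
    (measurable_rearrE _ _).mul hh.measurable
  have hmono_rearr : Monotone fun n t => rearrE (volI a) (damp f n (ε n)) t * h t :=
    fun m n hmn t => mul_le_mul_left (rearrE_mono _ (hmono hmn) t) _
  simp_rw [hrearr, ENNReal.iSup_mul]
  rw [lintegral_iSup hmeas hmono_rearr]
  exact iSup_le fun n => setLIntegral_rearrE_mul_le_lorentzDualNorm_of_noTies hp
    (measurable_damp hf n _) (damp_le f n (hε_pos n).le) (volI_damp_pos_ne_top a f n _)
    (hties n) hh hh_top hh1

/-- `N` bounds the functional `h ↦ ∫ u h` on the non-negative decreasing functions of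
`L^p(w)` on `(0, a)`. -/
def IsDecreasingDualBound (a : ℝ≥0∞) (u w : ℝ → ℝ≥0∞) (p : ℝ) (N : ℝ≥0∞) : Prop :=
  ∀ h : ℝ → ℝ≥0∞, Antitone h → (∀ t, h t ≠ ⊤) → ∫⁻ t in Iset a, h t ^ p * w t ≠ ⊤ →
    ∫⁻ t in Iset a, u t * h t ≤ N * (∫⁻ t in Iset a, h t ^ p * w t) ^ (1 / p)

theorem isDecreasingDualBound_lorentzDualNorm {w : ℝ → ℝ} (hw : Measurable w)
    (hw_pos : ∀ x ∈ Iset a, 0 < w x) {p : ℝ} (hp : 0 < p) {f : ℝ → ℝ} (hf : Measurable f) :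
    IsDecreasingDualBound a (rearr (volI a) f) (fun t => ENNReal.ofReal (w t)) p
      (lorentzDualNorm a w p f) := by
  intro h hh hh_top hA
  have hmeas_pow : Measurable fun t => h t ^ p * ENNReal.ofReal (w t) :=
    (hh.measurable.pow_const p).mul hw.ennreal_ofReal
  have hmeas_mul : Measurable fun t => rearr (volI a) f t * h t :=
    (measurable_rearrE _ _).mul hh.measurable
  set A := ∫⁻ t in Iset a, h t ^ p * ENNReal.ofReal (w t) with hA_def
  rcases eq_or_ne A 0 with h0 | h0
  · have hae : ∀ᵐ t ∂volume.restrict (Iset a), rearr (volI a) f t * h t = 0 := by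
      filter_upwards [(lintegral_eq_zero_iff hmeas_pow).1 h0,
        ae_restrict_mem (measurableSet_Iset a)] with t ht hta
      have hwt : ENNReal.ofReal (w t) ≠ 0 := (ENNReal.ofReal_pos.2 (hw_pos t hta)).ne'
      rw [(ENNReal.rpow_eq_zero_iff_of_pos hp).1 ((mul_eq_zero.1 ht).resolve_right hwt), mul_zero]
    rw [lintegral_congr_ae hae, lintegral_zero]
    exact zero_le
  · set B := A ^ (1 / p) with hB_def
    have hB0 : B ≠ 0 := (ENNReal.rpow_pos (pos_iff_ne_zero.2 h0) hA).ne'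
    have hB_top : B ≠ ⊤ := ENNReal.rpow_ne_top_of_nonneg (by positivity) hA
    have hscaled := setLIntegral_rearr_mul_le_lorentzDualNorm (a := a) (w := w) hp.le hf
      (h := fun t => B⁻¹ * h t) (fun s t hst => mul_le_mul_right (hh hst) _)
      (fun t => ENNReal.mul_ne_top (ENNReal.inv_ne_top.2 hB0) (hh_top t)) (by
        simp_rw [ENNReal.mul_rpow_of_nonneg _ _ hp.le, mul_assoc]
        rw [lintegral_const_mul _ hmeas_pow, ← hA_def,
          ENNReal.inv_rpow, hB_def, ← ENNReal.rpow_mul, one_div_mul_cancel hp.ne',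
          ENNReal.rpow_one, ENNReal.inv_mul_cancel h0 hA])
    simp_rw [mul_left_comm _ B⁻¹] at hscaled
    rw [lintegral_const_mul _ hmeas_mul] at hscaled
    rw [mul_comm]
    exact (ENNReal.inv_mul_le_iff hB0 hB_top).1 hscaled

end DualNorm

section Envelope

variable {Φ U : ℝ → ℝ}

theorem antitoneOn_of_subgradient
    (hsub : ∀ s > 0, ∀ t > 0, Φ s - (t - s) * U s ≤ Φ t) : AntitoneOn U (Ioi 0) := by
  intro s hs t ht hst
  rcases hst.eq_or_lt with rfl | hlt
  · exact le_rfl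
  · have h₁ := hsub s hs t ht
    have h₂ := hsub t ht s hs
    exact le_of_mul_le_mul_left (by linarith) (sub_pos.2 hlt)

theorem abs_sub_add_mul_le_of_subgradient
    (hsub : ∀ s > 0, ∀ t > 0, Φ s - (t - s) * U s ≤ Φ t) {s t : ℝ} (hs : 0 < s) (ht : 0 < t) :
    |Φ t - Φ s + (t - s) * U s| ≤ |U t - U s| * |t - s| := by
  have h₁ := hsub s hs t ht
  have h₂ := hsub t ht s hs
  rw [← abs_mul, abs_of_nonneg (by linarith)]
  refine le_trans ?_ (neg_le_abs _)
  linarith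

theorem hasDerivAt_of_subgradient (hsub : ∀ s > 0, ∀ t > 0, Φ s - (t - s) * U s ≤ Φ t)
    {s : ℝ} (hs : 0 < s) (hU : ContinuousAt U s) : HasDerivAt Φ (-U s) s := by
  rw [hasDerivAt_iff_isLittleO]
  refine Asymptotics.IsLittleO.of_bound fun c hc => ?_
  filter_upwards [Metric.continuousAt_iff'.1 hU c hc, lt_mem_nhds hs] with t htc ht
  calc ‖Φ t - Φ s - (t - s) • -U s‖ = |Φ t - Φ s + (t - s) * U s| := by
        rw [smul_eq_mul, mul_neg, sub_neg_eq_add, Real.norm_eq_abs]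
    _ ≤ |U t - U s| * |t - s| := abs_sub_add_mul_le_of_subgradient hsub hs ht
    _ ≤ c * ‖t - s‖ := mul_le_mul_of_nonneg_right htc.le (abs_nonneg _)

theorem convexOn_of_subgradient (hsub : ∀ s > 0, ∀ t > 0, Φ s - (t - s) * U s ≤ Φ t) :
    ConvexOn ℝ (Ioi 0) Φ := by
  refine ⟨convex_Ioi 0, fun x hx y hy α β hα hβ hαβ => ?_⟩
  simp only [smul_eq_mul]
  have hz : 0 < α * x + β * y := convex_Ioi (0 : ℝ) hx hy hα hβ hαβ
  have hx' := mul_le_mul_of_nonneg_left (hsub _ hz x hx) hα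
  have hy' := mul_le_mul_of_nonneg_left (hsub _ hz y hy) hβ
  obtain rfl : β = 1 - α := by linarith
  linarith

theorem intervalIntegral_eq_of_subgradient
    (hsub : ∀ s > 0, ∀ t > 0, Φ s - (t - s) * U s ≤ Φ t) {s t : ℝ} (hs : 0 < s) (hst : s ≤ t) :
    ∫ r in s..t, U r = Φ s - Φ t := by
  have hanti := antitoneOn_of_subgradient hsub
  have hIcc : Icc s t ⊆ Ioi 0 := fun r hr => hs.trans_le hr.1
  have hderiv : ∀ r ∈ Ioo s t \ {r ∈ Ioi 0 | ¬ContinuousWithinAt U (Ioi 0) r},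
      HasDerivAt Φ (-U r) r := fun r hr => by
    have hr0 : r ∈ Ioi 0 := hIcc (Ioo_subset_Icc_self hr.1)
    have hcont : ContinuousWithinAt U (Ioi 0) r := not_not.1 fun h => hr.2 ⟨hr0, h⟩
    exact hasDerivAt_of_subgradient hsub hr0 (hcont.continuousAt (Ioi_mem_nhds hr0))
  have hint : IntervalIntegrable U volume s t :=
    AntitoneOn.intervalIntegrable (hanti.mono ((uIcc_of_le hst).trans_subset hIcc))
  have hFTC := integral_eq_of_hasDerivAt_off_countable_of_le Φ (fun r => -U r) hst
    hanti.countable_not_continuousWithinAt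
    ((convexOn_of_subgradient hsub).continuousOn isOpen_Ioi |>.mono hIcc) hderiv hint.neg
  rw [intervalIntegral.integral_neg] at hFTC
  linarith

theorem setLIntegral_Ioi_of_subgradient (hU : ∀ s > 0, 0 ≤ U s)
    (hsub : ∀ s > 0, ∀ t > 0, Φ s - (t - s) * U s ≤ Φ t) (hlim : Tendsto Φ atTop (nhds 0))
    {s : ℝ} (hs : 0 < s) : ∫⁻ t in Ioi s, ENNReal.ofReal (U t) = ENNReal.ofReal (Φ s) := by
  have hint (t : ℝ) : IntegrableOn U (Ioc s t) :=
    ((antitoneOn_of_subgradient hsub).mono fun r hr => hs.trans_le hr.1).integrableOn_isCompact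
      isCompact_Icc |>.mono_set Ioc_subset_Icc_self
  have hnonneg : ∀ᵐ r ∂volume.restrict (Ioi s), 0 ≤ U r := by
    filter_upwards [ae_restrict_mem measurableSet_Ioi] with r hr using hU r (hs.trans hr)
  have htend : Tendsto (fun t => ∫ r in s..t, U r) atTop (nhds (Φ s)) := by
    refine Tendsto.congr' (f₁ := fun t => Φ s - Φ t) ?_ (by simpa using hlim.const_sub (Φ s))
    filter_upwards [eventually_ge_atTop s] with t ht
    exact (intervalIntegral_eq_of_subgradient hsub hs ht).symm
  have hintegrable : IntegrableOn U (Ioi s) := by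
    refine integrableOn_Ioi_of_intervalIntegral_norm_tendsto (Φ s) s hint tendsto_id ?_
    refine htend.congr' ?_
    filter_upwards [eventually_ge_atTop s] with t ht
    refine intervalIntegral.integral_congr_ae (ae_of_all _ fun r hr => ?_)
    rw [uIoc_of_le ht] at hr
    exact (Real.norm_of_nonneg (hU r (hs.trans hr.1))).symm
  rw [← ofReal_integral_eq_lintegral_ofReal hintegrable hnonneg]
  exact congrArg _ (tendsto_nhds_unique
    (intervalIntegral_tendsto_integral_Ioi s hintegrable tendsto_id) htend)

end Envelope

section Young

variable {p q : ℝ}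

theorem rpow_one_div_mul_rpow_one_div (hpq : p.HolderConjugate q) (A : ℝ≥0∞) :
    A ^ (1 / q) * A ^ (1 / p) = A := by
  rw [← ENNReal.rpow_add_of_nonneg _ _ hpq.symm.one_div_nonneg hpq.one_div_nonneg,
    hpq.symm.one_div_add_one_div, div_one, ENNReal.rpow_one]

theorem mul_rpow_one_div_le (hpq : p.HolderConjugate q) {A B : ℝ≥0∞} (h : B ^ q ≤ A) :
    B * A ^ (1 / p) ≤ A := by
  calc B * A ^ (1 / p) ≤ A ^ (1 / q) * A ^ (1 / p) := by
        rw [one_div q]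
        exact mul_le_mul_left ((ENNReal.le_rpow_inv_iff hpq.symm.pos).2 h) _
    _ = A := rpow_one_div_mul_rpow_one_div hpq A

theorem le_rpow_of_le_mul_rpow_one_div (hpq : p.HolderConjugate q) {A B : ℝ≥0∞} (hA : A ≠ ⊤)
    (h : A ≤ B * A ^ (1 / p)) : A ≤ B ^ q := by
  rcases eq_or_ne A 0 with rfl | h0
  · exact zero_le
  have hpow0 : A ^ (1 / p) ≠ 0 := (ENNReal.rpow_pos (pos_iff_ne_zero.2 h0) hA).ne'
  have hpow_top : A ^ (1 / p) ≠ ⊤ := ENNReal.rpow_ne_top_of_nonneg hpq.one_div_nonneg hA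
  rw [← ENNReal.rpow_inv_le_iff hpq.symm.pos, ← one_div]
  refine (ENNReal.mul_le_mul_iff_left hpow0 hpow_top).1 ?_
  rwa [rpow_one_div_mul_rpow_one_div hpq]

end Young

/-- `x l` maximises `U - l W` over `[0, a]`, where `U` and `W` are the primitives of `u` and `w`:
the contact points of the least concave majorant of `U` as a function of `W`, indexed by slope. -/
structure IsLevelMap (a : ℝ≥0∞) (u w : ℝ → ℝ≥0∞) (x : ℝ → ℝ≥0∞) : Prop where
  antitone : Antitone x
  le (l : ℝ) : x l ≤ a
  primitive_ne_top {l : ℝ} (hl : 0 < l) : primitive w (x l) ≠ ⊤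
  le_sub {l : ℝ} (hl : 0 < l) {y : ℝ≥0∞} (hy : y ≤ a) (hWy : primitive w y ≠ ⊤) :
    (primitive u y).toReal - l * (primitive w y).toReal ≤
      (primitive u (x l)).toReal - l * (primitive w (x l)).toReal

section LevelMap

variable {a N : ℝ≥0∞} {u w : ℝ → ℝ≥0∞} {p q : ℝ}

theorem IsDecreasingDualBound.primitive_le (hN : IsDecreasingDualBound a u w p N) (hp : 0 < p)
    {y : ℝ≥0∞} (hy : y ≤ a) (hWy : primitive w y ≠ ⊤) :
    primitive u y ≤ N * primitive w y ^ (1 / p) := by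
  set h : ℝ → ℝ≥0∞ := fun t => if ENNReal.ofReal t < y then 1 else 0
  have hanti : Antitone h := fun s t hst => by
    by_cases ht : ENNReal.ofReal t < y
    · simp [h, ht, (ENNReal.ofReal_le_ofReal hst).trans_lt ht]
    · simp [h, ht]
  have hpow (t : ℝ) : h t ^ p = h t := by
    by_cases ht : ENNReal.ofReal t < y <;> simp [h, ht, hp]
  have hint (v : ℝ → ℝ≥0∞) : ∫⁻ t in Iset a, h t * v t = primitive v y := by
    rw [primitive_eq_setLIntegral_indicator v hy]
    refine setLIntegral_congr_fun (measurableSet_Iset a) fun t ht => ?_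
    by_cases hty : ENNReal.ofReal t < y
    · simp [h, hty, indicator_of_mem (show t ∈ Iset y from ⟨ht.1, hty⟩)]
    · simp [h, hty, indicator_of_notMem (show t ∉ Iset y from fun hmem => hty hmem.2)]
  have key := hN h hanti (fun t => by simp only [h]; split_ifs <;> simp)
    (by simpa only [hpow, hint] using hWy)
  simpa only [hpow, hint, mul_comm (u _)] using key

theorem IsDecreasingDualBound.primitive_ne_top (hN : IsDecreasingDualBound a u w p N)
    (hp : 0 < p) (hN_top : N ≠ ⊤) {y : ℝ≥0∞} (hy : y ≤ a) (hWy : primitive w y ≠ ⊤) :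
    primitive u y ≠ ⊤ :=
  ne_top_of_le_ne_top (ENNReal.mul_ne_top hN_top
    (ENNReal.rpow_ne_top_of_nonneg (one_div_nonneg.2 hp.le) hWy)) (hN.primitive_le hp hy hWy)

theorem IsDecreasingDualBound.exists_forall_gt_primitive_le
    (hN : IsDecreasingDualBound a u w p N) (hpq : p.HolderConjugate q) (hN_top : N ≠ ⊤)
    (hw_top : ∀ y ≤ a, y ≠ ⊤ → primitive w y ≠ ⊤) {l : ℝ≥0∞} (hl : l ≠ 0) (hl_top : l ≠ ⊤) :
    ∃ X ≤ a, primitive w X ≠ ⊤ ∧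
      ∀ y ≤ a, X < y → primitive w y ≠ ⊤ → primitive u y ≤ l * primitive w y := by
  by_cases hWa : primitive w a = ⊤
  · obtain rfl : a = ⊤ := by_contra fun ha => hw_top a le_rfl ha hWa
    have hlt : (N / l) ^ q < ⨆ n : ℕ, primitive w n := by
      rw [← primitive_top, hWa]
      exact (ENNReal.rpow_ne_top_of_nonneg hpq.symm.nonneg (ENNReal.div_ne_top hN_top hl)).lt_top
    obtain ⟨n, hn⟩ := lt_iSup_iff.1 hlt
    refine ⟨n, le_top, hw_top n le_top (ENNReal.natCast_ne_top n), fun y hy hny hWy => ?_⟩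
    calc primitive u y ≤ N * primitive w y ^ (1 / p) := hN.primitive_le hpq.pos hy hWy
      _ = l * (N / l * primitive w y ^ (1 / p)) := by
        rw [← mul_assoc, ENNReal.mul_div_cancel hl hl_top]
      _ ≤ l * primitive w y := mul_le_mul_right
        (mul_rpow_one_div_le hpq (hn.le.trans (primitive_mono w hny.le))) _
  · exact ⟨a, le_rfl, hWa, fun y hy hay => absurd hy hay.not_ge⟩

theorem IsDecreasingDualBound.exists_isMaxOn_sub (hN : IsDecreasingDualBound a u w p N)
    (hpq : p.HolderConjugate q) (hN_top : N ≠ ⊤) (hu : Measurable u) (hw : Measurable w)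
    (hw_top : ∀ y ≤ a, y ≠ ⊤ → primitive w y ≠ ⊤) {l : ℝ} (hl : 0 < l) :
    ∃ x ≤ a, primitive w x ≠ ⊤ ∧ ∀ y ≤ a, primitive w y ≠ ⊤ →
      (primitive u y).toReal - l * (primitive w y).toReal ≤
        (primitive u x).toReal - l * (primitive w x).toReal := by
  obtain ⟨X, hXa, hWX, hX⟩ := hN.exists_forall_gt_primitive_le hpq hN_top hw_top
    (ENNReal.ofReal_pos.2 hl).ne' ENNReal.ofReal_ne_top
  have hW_top : ∀ y ≤ X, primitive w y ≠ ⊤ := fun y hy =>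
    ne_top_of_le_ne_top hWX (primitive_mono w hy)
  have hU_top : ∀ y ≤ X, primitive u y ≠ ⊤ := fun y hy =>
    hN.primitive_ne_top hpq.pos hN_top (hy.trans hXa) (hW_top y hy)
  have hcont : ContinuousOn (fun y => (primitive u y).toReal - l * (primitive w y).toReal)
      (Iic X) :=
    (ENNReal.continuousOn_toReal.comp (continuousOn_primitive hu (hU_top X le_rfl)) hU_top).sub
      (continuousOn_const.mul
        (ENNReal.continuousOn_toReal.comp (continuousOn_primitive hw hWX) hW_top))
  obtain ⟨x, hxX, hmax⟩ := isClosed_Iic.isCompact.exists_isMaxOn ⟨0, zero_le⟩ hcont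
  refine ⟨x, hxX.trans hXa, hW_top x hxX, fun y hy hWy => ?_⟩
  rcases le_or_gt y X with hyX | hyX
  · exact hmax hyX
  · have hx0 : l * (primitive w x).toReal ≤ (primitive u x).toReal := by
      simpa [primitive_zero] using hmax (mem_Iic.2 (zero_le (a := X)))
    have hUy := ENNReal.toReal_mono (ENNReal.mul_ne_top ENNReal.ofReal_ne_top hWy)
      (hX y hy hyX hWy)
    rw [ENNReal.toReal_mul, ENNReal.toReal_ofReal hl.le] at hUy
    linarith

theorem IsDecreasingDualBound.exists_isLevelMap (hN : IsDecreasingDualBound a u w p N)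
    (hpq : p.HolderConjugate q) (hN_top : N ≠ ⊤) (hu : Measurable u) (hw : Measurable w)
    (hw_pos : ∀ t ∈ Iset a, 0 < w t) (hw_top : ∀ y ≤ a, y ≠ ⊤ → primitive w y ≠ ⊤) :
    ∃ x, IsLevelMap a u w x := by
  choose! z hza hz_top hz_max using fun l (hl : (0 : ℝ) < l) =>
    hN.exists_isMaxOn_sub hpq hN_top hu hw hw_top hl
  refine ⟨fun l => if 0 < l then z l else a, fun l m hlm => ?_, fun l => ?_, fun {l} hl => ?_,
    fun {l} hl => ?_⟩
  · by_cases hl : 0 < l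
    · have hm := hl.trans_le hlm
      simp only [hl, hm, if_true]
      by_contra! hlt
      have hW : (primitive w (z l)).toReal < (primitive w (z m)).toReal :=
        (ENNReal.toReal_lt_toReal (hz_top l hl) (hz_top m hm)).2 (primitive_lt_primitive hw hlt
          (fun t ht => hw_pos t (Iset_mono (hza m hm) ht)) (hz_top l hl))
      have hlm' : l < m := hlm.lt_of_ne fun h => hlt.ne (congrArg z h)
      have h₁ := hz_max l hl (z m) (hza m hm) (hz_top m hm)
      have h₂ := hz_max m hm (z l) (hza l hl) (hz_top l hl)
      linarith [mul_pos (sub_pos.2 hlm') (sub_pos.2 hW)]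
    · by_cases hm : 0 < m
      · simpa only [hl, hm, if_true, if_false] using hza m hm
      · simp only [hl, hm, if_false, le_rfl]
  · split_ifs with hl
    exacts [hza l hl, le_rfl]
  · simpa only [hl, if_true] using hz_top l hl
  · simpa only [hl, if_true] using fun {y} => hz_max l hl y

end LevelMap

namespace IsLevelMap

variable {a N : ℝ≥0∞} {u w : ℝ → ℝ≥0∞} {p q : ℝ} {x : ℝ → ℝ≥0∞}

theorem mul_toReal_le (hx : IsLevelMap a u w x) {l : ℝ} (hl : 0 < l) :
    l * (primitive w (x l)).toReal ≤ (primitive u (x l)).toReal := by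
  simpa [primitive_zero] using hx.le_sub hl (y := 0) zero_le (by simp [primitive_zero])

theorem mul_primitive_le (hx : IsLevelMap a u w x) {l : ℝ} (hl : 0 < l) :
    ENNReal.ofReal l * primitive w (x l) ≤ primitive u (x l) := by
  rw [← ENNReal.ofReal_toReal (hx.primitive_ne_top hl), ← ENNReal.ofReal_mul hl.le]
  exact (ENNReal.ofReal_le_ofReal (hx.mul_toReal_le hl)).trans ENNReal.ofReal_toReal_le

theorem primitive_le_rpow (hx : IsLevelMap a u w x) (hN : IsDecreasingDualBound a u w p N)
    (hpq : p.HolderConjugate q) {l : ℝ} (hl : 0 < l) :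
    primitive w (x l) ≤ (N / ENNReal.ofReal l) ^ q := by
  refine le_rpow_of_le_mul_rpow_one_div hpq (hx.primitive_ne_top hl) ?_
  rw [ENNReal.mul_div_right_comm.symm, ENNReal.le_div_iff_mul_le
    (Or.inl (ENNReal.ofReal_pos.2 hl).ne') (Or.inl ENNReal.ofReal_ne_top), mul_comm]
  exact (hx.mul_primitive_le hl).trans
    (hN.primitive_le hpq.pos (hx.le l) (hx.primitive_ne_top hl))

theorem tendsto_primitive (hx : IsLevelMap a u w x) (hN : IsDecreasingDualBound a u w p N)
    (hpq : p.HolderConjugate q) (hN_top : N ≠ ⊤) :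
    Tendsto (fun l => primitive w (x l)) atTop (nhds 0) := by
  have hlim : Tendsto (fun l => (N / ENNReal.ofReal l) ^ q) atTop (nhds 0) := by
    have := (ENNReal.Tendsto.const_div ENNReal.tendsto_ofReal_atTop (Or.inr hN_top)).ennrpow_const q
    rwa [ENNReal.div_top, ENNReal.zero_rpow_of_pos hpq.symm.pos] at this
  refine tendsto_of_tendsto_of_tendsto_of_le_of_le' tendsto_const_nhds hlim
    (Eventually.of_forall fun l => zero_le) ?_
  filter_upwards [eventually_gt_atTop 0] with l hl using hx.primitive_le_rpow hN hpq hl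

theorem eventually_le (hx : IsLevelMap a u w x) (hN : IsDecreasingDualBound a u w p N)
    (hpq : p.HolderConjugate q) (hN_top : N ≠ ⊤) (hw : Measurable w)
    (hw_pos : ∀ t ∈ Iset a, 0 < w t) {y : ℝ≥0∞} (hy0 : 0 < y) (hy : y ≤ a) :
    ∀ᶠ l in atTop, x l ≤ y := by
  have hW : 0 < primitive w y := by
    simpa only [primitive_zero] using primitive_lt_primitive hw hy0
      (fun t ht => hw_pos t (Iset_mono hy ht)) (by simp [primitive_zero])
  filter_upwards [(hx.tendsto_primitive hN hpq hN_top).eventually_lt_const hW] with l hl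
  exact (lt_of_not_ge fun h => hl.not_ge (primitive_mono w h)).le

theorem tendsto_sub (hx : IsLevelMap a u w x) (hN : IsDecreasingDualBound a u w p N)
    (hpq : p.HolderConjugate q) (hN_top : N ≠ ⊤) :
    Tendsto (fun l => (primitive u (x l)).toReal - l * (primitive w (x l)).toReal)
      atTop (nhds 0) := by
  have hU : Tendsto (fun l => primitive u (x l)) atTop (nhds 0) := by
    have hlim := ENNReal.Tendsto.const_mul
      ((hx.tendsto_primitive hN hpq hN_top).ennrpow_const (1 / p)) (Or.inr hN_top)
    rw [ENNReal.zero_rpow_of_pos hpq.one_div_pos, mul_zero] at hlim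
    refine tendsto_of_tendsto_of_tendsto_of_le_of_le' tendsto_const_nhds hlim
      (Eventually.of_forall fun l => zero_le) ?_
    filter_upwards [eventually_gt_atTop 0] with l hl using
      hN.primitive_le hpq.pos (hx.le l) (hx.primitive_ne_top hl)
  refine tendsto_of_tendsto_of_tendsto_of_le_of_le' tendsto_const_nhds
    ((ENNReal.tendsto_toReal ENNReal.zero_ne_top).comp hU) ?_ ?_
  · filter_upwards [eventually_gt_atTop 0] with l hl using sub_nonneg.2 (hx.mul_toReal_le hl)
  · filter_upwards [eventually_gt_atTop 0] with l hl
    exact sub_le_self _ (mul_nonneg hl.le ENNReal.toReal_nonneg)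

/- The maximum `Φ l` of `U - l W` is a convex function of `l` with subgradient `-W (x l)`. -/
theorem setLIntegral_Ioi (hx : IsLevelMap a u w x) (hN : IsDecreasingDualBound a u w p N)
    (hpq : p.HolderConjugate q) (hN_top : N ≠ ⊤) {l : ℝ} (hl : 0 < l) :
    ∫⁻ s in Ioi l, primitive w (x s) =
      ENNReal.ofReal ((primitive u (x l)).toReal - l * (primitive w (x l)).toReal) := by
  rw [← setLIntegral_Ioi_of_subgradient
    (Φ := fun l => (primitive u (x l)).toReal - l * (primitive w (x l)).toReal)
    (fun s _ => ENNReal.toReal_nonneg) (fun s hs t ht => ?_) (hx.tendsto_sub hN hpq hN_top) hl]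
  · exact setLIntegral_congr_fun measurableSet_Ioi fun s hs =>
      (ENNReal.ofReal_toReal (hx.primitive_ne_top (hl.trans hs))).symm
  · linarith [hx.le_sub ht (hx.le s) (hx.primitive_ne_top hs)]

theorem primitive_eq_add (hx : IsLevelMap a u w x) (hN : IsDecreasingDualBound a u w p N)
    (hpq : p.HolderConjugate q) (hN_top : N ≠ ⊤) {l : ℝ} (hl : 0 < l) :
    primitive u (x l) =
      ENNReal.ofReal l * primitive w (x l) + ∫⁻ s in Ioi l, primitive w (x s) := by
  have hW := hx.primitive_ne_top hl
  rw [hx.setLIntegral_Ioi hN hpq hN_top hl, ← ENNReal.ofReal_toReal hW, ← ENNReal.ofReal_mul hl.le,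
    ENNReal.toReal_ofReal ENNReal.toReal_nonneg, ← ENNReal.ofReal_add
      (mul_nonneg hl.le ENNReal.toReal_nonneg) (sub_nonneg.2 (hx.mul_toReal_le hl)),
    add_sub_cancel, ENNReal.ofReal_toReal (hN.primitive_ne_top hpq.pos hN_top (hx.le l) hW)]

theorem primitive_le_add (hx : IsLevelMap a u w x) (hN : IsDecreasingDualBound a u w p N)
    (hpq : p.HolderConjugate q) (hN_top : N ≠ ⊤) {l : ℝ} (hl : 0 < l) {y : ℝ≥0∞} (hy : y ≤ a) :
    primitive u y ≤ ENNReal.ofReal l * primitive w y + ∫⁻ s in Ioi l, primitive w (x s) := by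
  rcases eq_or_ne (primitive w y) ⊤ with hW | hW
  · rw [hW, ENNReal.mul_top (ENNReal.ofReal_pos.2 hl).ne', top_add]
    exact le_top
  · rw [hx.setLIntegral_Ioi hN hpq hN_top hl, ← ENNReal.ofReal_toReal hW,
      ← ENNReal.ofReal_mul hl.le, ← ENNReal.ofReal_add
      (mul_nonneg hl.le ENNReal.toReal_nonneg) (sub_nonneg.2 (hx.mul_toReal_le hl)),
      ENNReal.le_ofReal_iff_toReal_le (hN.primitive_ne_top hpq.pos hN_top hy hW)]
    · linarith [hx.le_sub hl hy hW]
    · have := hx.mul_toReal_le hl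
      have := mul_nonneg hl.le (ENNReal.toReal_nonneg (a := primitive w y))
      linarith

end IsLevelMap

/-- The generalised inverse of a decreasing `x : (0, ∞) → [0, ∞]`. -/
noncomputable def distrib (x : ℝ → ℝ≥0∞) (t : ℝ) : ℝ≥0∞ :=
  volume {l : ℝ | 0 < l ∧ ENNReal.ofReal t < x l}

section Distrib

variable {x : ℝ → ℝ≥0∞}

theorem antitone_distrib (x : ℝ → ℝ≥0∞) : Antitone (distrib x) := fun _ _ hst =>
  measure_mono fun _ hl => ⟨hl.1, (ENNReal.ofReal_le_ofReal hst).trans_lt hl.2⟩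

theorem distrib_ne_top_of_eventually_le {t : ℝ} (ht : ∀ᶠ l in atTop, x l ≤ ENNReal.ofReal t) :
    distrib x t ≠ ⊤ := by
  obtain ⟨L, hL⟩ := eventually_atTop.1 ht
  have hsub : {l : ℝ | 0 < l ∧ ENNReal.ofReal t < x l} ⊆ Ioo 0 L := fun l hl =>
    ⟨hl.1, lt_of_not_ge fun hLl => hl.2.not_ge (hL l hLl)⟩
  exact measure_ne_top_of_subset hsub measure_Ioo_lt_top.ne

theorem ae_eq_Iset_distrib (hx : Antitone x) (t : ℝ) :
    ({l : ℝ | 0 < l ∧ ENNReal.ofReal t < x l} : Set ℝ) =ᵐ[volume] Iset (distrib x t) :=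
  ae_eq_Iset_volume (fun _ hl => hl.1) fun _ hl _ hr hrl => ⟨hr, hl.2.trans_le (hx hrl)⟩

theorem setLIntegral_mul_primitive_distrib (hx : Antitone x) {u k : ℝ → ℝ≥0∞}
    (hu : Measurable u) (hk : Measurable k) (a : ℝ≥0∞) :
    ∫⁻ t in Iset a, u t * primitive k (distrib x t) =
      ∫⁻ l in Ioi (0 : ℝ), k l * primitive u (min a (x l)) := by
  have hx_meas := hx.measurable
  have hR : MeasurableSet {z : ℝ × ℝ | ENNReal.ofReal z.1 < x z.2} :=
    measurableSet_lt (by fun_prop) (by fun_prop)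
  have hleft (t : ℝ) : primitive k (distrib x t) =
      ∫⁻ l in {l | ENNReal.ofReal t < x l}, k l ∂volume.restrict (Ioi 0) := by
    rw [Measure.restrict_restrict (measurableSet_lt measurable_const hx_meas), inter_comm]
    exact (setLIntegral_congr (ae_eq_Iset_distrib hx t)).symm
  have hright (l : ℝ) : primitive u (min a (x l)) =
      ∫⁻ t in {t | ENNReal.ofReal t < x l}, u t ∂volume.restrict (Iset a) := by
    rw [Measure.restrict_restrict (measurableSet_lt (by fun_prop) measurable_const), primitive]
    congr 2
    ext t
    simp only [Iset, mem_ofPred_eq, mem_inter_iff, lt_min_iff]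
    tauto
  simp_rw [hleft, hright]
  exact lintegral_mul_setLIntegral_swap _ _ hR hu hk

theorem setLIntegral_mul_distrib_rpow (hx : Antitone x) {u : ℝ → ℝ≥0∞} (hu : Measurable u)
    {a : ℝ≥0∞} (hxa : ∀ l, x l ≤ a) {c : ℝ} (hc : 0 < c) :
    ∫⁻ t in Iset a, u t * distrib x t ^ c =
      ∫⁻ l in Ioi (0 : ℝ), ENNReal.ofReal (c * l ^ (c - 1)) * primitive u (x l) := by
  simp_rw [← primitive_rpow hc]
  rw [setLIntegral_mul_primitive_distrib hx hu (by fun_prop)]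
  simp_rw [min_eq_right (hxa _)]

theorem setLIntegral_mul_distrib (hx : Antitone x) {u : ℝ → ℝ≥0∞} (hu : Measurable u)
    (y : ℝ≥0∞) :
    ∫⁻ t in Iset y, u t * distrib x t = ∫⁻ l in Ioi (0 : ℝ), primitive u (min y (x l)) := by
  have := setLIntegral_mul_primitive_distrib hx hu (measurable_const (a := (1 : ℝ≥0∞))) y
  simpa only [primitive, setLIntegral_one, volume_Iset, one_mul] using this

theorem add_setLIntegral_Ioi_le_setLIntegral_mul_distrib (hx : Antitone x) {w : ℝ → ℝ≥0∞}
    (hw : Measurable w) {t l : ℝ} (hl : distrib x t < ENNReal.ofReal l) :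
    distrib x t * primitive w (ENNReal.ofReal t) + ∫⁻ s in Ioi l, primitive w (x s) ≤
      ∫⁻ s in Iset (ENNReal.ofReal t), w s * distrib x s := by
  set S := {s : ℝ | 0 < s ∧ ENNReal.ofReal t < x s}
  set y := ENNReal.ofReal t
  have hl0 : 0 < l := ENNReal.ofReal_pos.1 (pos_of_gt hl)
  have hle {s : ℝ} (hs : l < s) : x s ≤ y := le_of_not_gt fun hys => by
    have hsub : Iset (ENNReal.ofReal s) ⊆ S := fun r hr =>
      ⟨hr.1, hys.trans_le (hx ((ENNReal.ofReal_lt_ofReal_iff (hl0.trans hs)).1 hr.2).le)⟩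
    have := (volume_Iset _).symm.trans_le (measure_mono hsub)
    exact (hl.trans_le (ENNReal.ofReal_le_ofReal hs.le)).not_ge this
  have hdisj : Disjoint S (Ioi l) :=
    disjoint_left.2 fun s hs hls => hs.2.not_ge (hle hls)
  have hS : MeasurableSet S :=
    measurableSet_Ioi.inter (measurableSet_lt measurable_const hx.measurable)
  calc distrib x t * primitive w y + ∫⁻ s in Ioi l, primitive w (x s)
      = (∫⁻ s in S, primitive w (min y (x s))) +
          ∫⁻ s in Ioi l, primitive w (min y (x s)) := by
        congr 1
        · rw [mul_comm, distrib, ← setLIntegral_const]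
          exact setLIntegral_congr_fun hS fun s hs => by rw [min_eq_left hs.2.le]
        · exact setLIntegral_congr_fun measurableSet_Ioi fun s hs => by
            rw [min_eq_right (hle hs)]
    _ = ∫⁻ s in S ∪ Ioi l, primitive w (min y (x s)) :=
        (lintegral_union measurableSet_Ioi hdisj).symm
    _ ≤ ∫⁻ s in Ioi (0 : ℝ), primitive w (min y (x s)) :=
        lintegral_mono_set (union_subset (fun s hs => hs.1) (Ioi_subset_Ioi hl0.le))
    _ = ∫⁻ s in Iset y, w s * distrib x s := (setLIntegral_mul_distrib hx hw y).symm

end Distrib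

namespace IsLevelMap

variable {a N : ℝ≥0∞} {u w : ℝ → ℝ≥0∞} {p q : ℝ} {x : ℝ → ℝ≥0∞}

theorem distrib_ne_top (hx : IsLevelMap a u w x) (hN : IsDecreasingDualBound a u w p N)
    (hpq : p.HolderConjugate q) (hN_top : N ≠ ⊤) (hw : Measurable w)
    (hw_pos : ∀ t ∈ Iset a, 0 < w t) {t : ℝ} (ht : 0 < t) (hta : ENNReal.ofReal t ≤ a) :
    distrib x t ≠ ⊤ :=
  distrib_ne_top_of_eventually_le
    (hx.eventually_le hN hpq hN_top hw hw_pos (ENNReal.ofReal_pos.2 ht) hta)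

theorem primitive_le_setLIntegral_mul_distrib (hx : IsLevelMap a u w x)
    (hN : IsDecreasingDualBound a u w p N) (hpq : p.HolderConjugate q) (hN_top : N ≠ ⊤)
    (hw : Measurable w) (hw_pos : ∀ t ∈ Iset a, 0 < w t) {t : ℝ} (hta : ENNReal.ofReal t ≤ a)
    (hW : primitive w (ENNReal.ofReal t) ≠ ⊤) :
    primitive u (ENNReal.ofReal t) ≤ ∫⁻ s in Iset (ENNReal.ofReal t), w s * distrib x s := by
  rcases le_or_gt t 0 with ht | ht
  · simp [ENNReal.ofReal_of_nonpos ht, primitive_zero]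
  set y := ENNReal.ofReal t
  set G := ∫⁻ s in Iset y, w s * distrib x s
  set v := distrib x t
  have hv : v ≠ ⊤ := hx.distrib_ne_top hN hpq hN_top hw hw_pos ht hta
  have hbound (δ : ℝ) (hδ : 0 < δ) : primitive u y ≤ ENNReal.ofReal δ * primitive w y + G := by
    have hl : 0 < v.toReal + δ := add_pos_of_nonneg_of_pos ENNReal.toReal_nonneg hδ
    have hofl : ENNReal.ofReal (v.toReal + δ) = v + ENNReal.ofReal δ := by
      rw [ENNReal.ofReal_add ENNReal.toReal_nonneg hδ.le, ENNReal.ofReal_toReal hv]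
    have hvl : v < ENNReal.ofReal (v.toReal + δ) :=
      hofl ▸ ENNReal.lt_add_right hv (ENNReal.ofReal_pos.2 hδ).ne'
    calc primitive u y ≤ ENNReal.ofReal (v.toReal + δ) * primitive w y +
          ∫⁻ s in Ioi (v.toReal + δ), primitive w (x s) :=
          hx.primitive_le_add hN hpq hN_top hl hta
      _ = ENNReal.ofReal δ * primitive w y + (v * primitive w y +
          ∫⁻ s in Ioi (v.toReal + δ), primitive w (x s)) := by rw [hofl]; ring
      _ ≤ ENNReal.ofReal δ * primitive w y + G := by
          gcongr
          exact add_setLIntegral_Ioi_le_setLIntegral_mul_distrib hx.antitone hw hvl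
  have hlim : Tendsto (fun δ : ℝ => ENNReal.ofReal δ * primitive w y + G)
      (nhdsWithin 0 (Ioi 0)) (nhds G) := by
    have hδ : Tendsto ENNReal.ofReal (nhdsWithin 0 (Ioi 0)) (nhds 0) := by
      simpa using (ENNReal.tendsto_ofReal (tendsto_id (x := nhds (0 : ℝ)))).mono_left
        nhdsWithin_le_nhds
    simpa using (ENNReal.Tendsto.mul_const hδ (Or.inr hW)).add_const G
  exact ge_of_tendsto hlim (by filter_upwards [self_mem_nhdsWithin] with δ hδ using hbound δ hδ)

end IsLevelMap

section NormBound

variable {a N : ℝ≥0∞} {u w : ℝ → ℝ≥0∞} {p q : ℝ} {x : ℝ → ℝ≥0∞}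

theorem setLIntegral_rpow_mul_setLIntegral_Ioi {c : ℝ} (hc : 0 < c) {V : ℝ → ℝ≥0∞}
    (hV : Measurable V) :
    ∫⁻ l in Ioi (0 : ℝ), ENNReal.ofReal (c * l ^ (c - 1)) * ∫⁻ s in Ioi l, V s =
      ∫⁻ s in Ioi (0 : ℝ), ENNReal.ofReal s ^ c * V s := by
  have hR : MeasurableSet {z : ℝ × ℝ | z.1 < z.2} :=
    measurableSet_lt measurable_fst measurable_snd
  have hswap := lintegral_mul_setLIntegral_swap (volume.restrict (Ioi 0))
    (volume.restrict (Ioi 0)) hR (u := fun l => ENNReal.ofReal (c * l ^ (c - 1)))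
    (by fun_prop) hV
  have hleft : ∫⁻ l in Ioi (0 : ℝ), ENNReal.ofReal (c * l ^ (c - 1)) * ∫⁻ s in Ioi l, V s =
      ∫⁻ l in Ioi (0 : ℝ), ENNReal.ofReal (c * l ^ (c - 1)) *
        ∫⁻ s in {s | l < s}, V s ∂volume.restrict (Ioi 0) :=
    setLIntegral_congr_fun measurableSet_Ioi fun l hl => by
      change _ = _ * ∫⁻ s in Ioi l, V s ∂volume.restrict (Ioi 0)
      rw [Measure.restrict_restrict measurableSet_Ioi,
        inter_eq_self_of_subset_left (Ioi_subset_Ioi hl.le)]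
  rw [hleft]
  refine hswap.trans (setLIntegral_congr_fun measurableSet_Ioi fun s hs => ?_)
  change V s * (∫⁻ l in Iio s, ENNReal.ofReal (c * l ^ (c - 1)) ∂volume.restrict (Ioi 0)) = _
  rw [← setLIntegral_Ioo_rpow hc hs.le, mul_comm,
    Measure.restrict_restrict measurableSet_Iio, inter_comm, Ioi_inter_Iio]

theorem setLIntegral_rpow_mul_add (hq : 1 < q) {V : ℝ → ℝ≥0∞} (hV : Measurable V) :
    ∫⁻ l in Ioi (0 : ℝ), ENNReal.ofReal ((q - 1) * l ^ (q - 1 - 1)) *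
        (ENNReal.ofReal l * V l + ∫⁻ s in Ioi l, V s) =
      ∫⁻ l in Ioi (0 : ℝ), ENNReal.ofReal (q * l ^ (q - 1)) * V l := by
  have hcoef {l : ℝ} (hl : 0 < l) : ENNReal.ofReal ((q - 1) * l ^ (q - 1 - 1)) *
      ENNReal.ofReal l + ENNReal.ofReal l ^ (q - 1) = ENNReal.ofReal (q * l ^ (q - 1)) := by
    have : 0 < q - 1 := sub_pos.2 hq
    rw [← ENNReal.ofReal_mul (by positivity), ENNReal.ofReal_rpow_of_pos hl,
      ← ENNReal.ofReal_add (by positivity) (by positivity), mul_assoc,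
      Real.rpow_sub_one hl.ne' (q - 1), div_mul_cancel₀ _ hl.ne']
    congr 1
    ring
  have hmeas : Measurable fun l => ENNReal.ofReal ((q - 1) * l ^ (q - 1 - 1)) *
      (ENNReal.ofReal l * V l) := by fun_prop
  simp_rw [mul_add]
  rw [lintegral_add_left hmeas, setLIntegral_rpow_mul_setLIntegral_Ioi (sub_pos.2 hq) hV,
    ← lintegral_add_left hmeas]
  refine setLIntegral_congr_fun measurableSet_Ioi fun l hl => ?_
  simp only [← hcoef hl]
  ring

/- Both integrals are computed over the levels `l`; testing `N` on `(distrib x) ^ (q - 1)`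
then absorbs the left-hand side. -/
theorem IsDecreasingDualBound.setLIntegral_mul_distrib_rpow_le
    (hN : IsDecreasingDualBound a u w p N) (hpq : p.HolderConjugate q)
    (hu : Measurable u) (hw : Measurable w) (hx : Antitone x) (hxa : ∀ l, x l ≤ a)
    (hxu : ∀ l > 0, ENNReal.ofReal l * primitive w (x l) + ∫⁻ s in Ioi l, primitive w (x s) ≤
      primitive u (x l))
    (hx_top : ∀ t, distrib x t ≠ ⊤) (hA : ∫⁻ t in Iset a, w t * distrib x t ^ q ≠ ⊤) :
    ∫⁻ t in Iset a, w t * distrib x t ^ q ≤ N ^ q := by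
  have hq1 : 0 < q - 1 := hpq.symm.sub_one_pos
  have hpow (t : ℝ) : (distrib x t ^ (q - 1)) ^ p * w t = w t * distrib x t ^ q := by
    rw [← ENNReal.rpow_mul, hpq.symm.sub_one_mul_conj, mul_comm]
  have hV : Measurable fun l => primitive w (x l) :=
    ((primitive_mono w).comp_antitone hx).measurable
  refine le_rpow_of_le_mul_rpow_one_div hpq hA ?_
  calc ∫⁻ t in Iset a, w t * distrib x t ^ q
      = ∫⁻ l in Ioi (0 : ℝ), ENNReal.ofReal (q * l ^ (q - 1)) * primitive w (x l) :=
        setLIntegral_mul_distrib_rpow hx hw hxa hpq.symm.pos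
    _ = ∫⁻ l in Ioi (0 : ℝ), ENNReal.ofReal ((q - 1) * l ^ (q - 1 - 1)) *
          (ENNReal.ofReal l * primitive w (x l) + ∫⁻ s in Ioi l, primitive w (x s)) :=
        (setLIntegral_rpow_mul_add hpq.symm.lt hV).symm
    _ ≤ ∫⁻ l in Ioi (0 : ℝ), ENNReal.ofReal ((q - 1) * l ^ (q - 1 - 1)) * primitive u (x l) :=
        setLIntegral_mono' measurableSet_Ioi fun l hl => mul_le_mul_right (hxu l hl) _
    _ = ∫⁻ t in Iset a, u t * distrib x t ^ (q - 1) :=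
        (setLIntegral_mul_distrib_rpow hx hu hxa hq1).symm
    _ ≤ N * (∫⁻ t in Iset a, w t * distrib x t ^ q) ^ (1 / p) := by
        simpa only [hpow] using hN (fun t => distrib x t ^ (q - 1))
          (fun s t hst => ENNReal.rpow_le_rpow (antitone_distrib x hst) hq1.le)
          (fun t => ENNReal.rpow_ne_top_of_nonneg hq1.le (hx_top t)) (by simpa only [hpow] using hA)

/-- The decreasing map `x` made constant on `(0, ε]` and zero on `[k, ∞)`. -/
noncomputable def truncate (x : ℝ → ℝ≥0∞) (ε k l : ℝ) : ℝ≥0∞ :=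
  if l < k then x (max l ε) else 0

theorem antitone_truncate (hx : Antitone x) (ε k : ℝ) : Antitone (truncate x ε k) := by
  intro l m hlm
  by_cases hm : m < k
  · simpa only [truncate, hm, hlm.trans_lt hm, if_true] using hx (max_le_max_right ε hlm)
  · simp only [truncate, hm, if_false, zero_le]

theorem truncate_le (x : ℝ → ℝ≥0∞) (ε k l : ℝ) : truncate x ε k l ≤ x (max l ε) := by
  unfold truncate
  split_ifs
  exacts [le_rfl, zero_le]

theorem truncate_of_le {ε k l : ℝ} (hl : k ≤ l) : truncate x ε k l = 0 := if_neg hl.not_gt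

theorem truncate_of_mem_Ico {ε k l : ℝ} (hl : l ∈ Ico ε k) : truncate x ε k l = x l := by
  rw [truncate, if_pos hl.2, max_eq_left hl.1]

theorem distrib_truncate_ne_top (x : ℝ → ℝ≥0∞) (ε k t : ℝ) : distrib (truncate x ε k) t ≠ ⊤ :=
  distrib_ne_top_of_eventually_le <| by
    filter_upwards [eventually_ge_atTop k] with l hl
    exact (truncate_of_le hl).trans_le zero_le

theorem setLIntegral_mul_distrib_truncate_rpow_ne_top (hx : Antitone x) (hw : Measurable w)
    (hxa : ∀ l, x l ≤ a) {ε : ℝ} (hε : primitive w (x ε) ≠ ⊤) {k : ℝ} (hk : 0 ≤ k) (hq : 0 < q) :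
    ∫⁻ t in Iset a, w t * distrib (truncate x ε k) t ^ q ≠ ⊤ := by
  have hle (l : ℝ) : truncate x ε k l ≤ x ε := (truncate_le x ε k l).trans (hx (le_max_right l ε))
  have hbound {l : ℝ} (hl : 0 < l) :
      ENNReal.ofReal (q * l ^ (q - 1)) * primitive w (truncate x ε k l) ≤
        (Ioo 0 k).indicator (fun l => ENNReal.ofReal (q * l ^ (q - 1)) * primitive w (x ε)) l := by
    by_cases hlk : l < k
    · rw [indicator_of_mem (show l ∈ Ioo 0 k from ⟨hl, hlk⟩)]
      exact mul_le_mul_right (primitive_mono w (hle l)) _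
    · simp [truncate_of_le (not_lt.1 hlk), primitive_zero]
  refine ne_top_of_le_ne_top
    (ENNReal.mul_ne_top (ENNReal.rpow_ne_top_of_nonneg hq.le ENNReal.ofReal_ne_top) hε) <|
    calc ∫⁻ t in Iset a, w t * distrib (truncate x ε k) t ^ q
        = ∫⁻ l in Ioi (0 : ℝ), ENNReal.ofReal (q * l ^ (q - 1)) *
            primitive w (truncate x ε k l) :=
          setLIntegral_mul_distrib_rpow (antitone_truncate hx ε k) hw
            (fun l => (hle l).trans (hxa ε)) hq
      _ ≤ ∫⁻ l, (Ioo 0 k).indicator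
            (fun l => ENNReal.ofReal (q * l ^ (q - 1)) * primitive w (x ε)) l :=
          (setLIntegral_mono' measurableSet_Ioi fun l hl => hbound hl).trans
            (setLIntegral_le_lintegral _ _)
      _ = ENNReal.ofReal k ^ q * primitive w (x ε) := by
          rw [lintegral_indicator measurableSet_Ioo, lintegral_mul_const _ (by fun_prop),
            setLIntegral_Ioo_rpow hq hk]

end NormBound

namespace IsLevelMap

variable {a N : ℝ≥0∞} {u w : ℝ → ℝ≥0∞} {p q : ℝ} {x : ℝ → ℝ≥0∞}

theorem truncate_add_le (hx : IsLevelMap a u w x) (hN : IsDecreasingDualBound a u w p N)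
    (hpq : p.HolderConjugate q) (hN_top : N ≠ ⊤) (ε k : ℝ) {l : ℝ} (hl : 0 < l) :
    ENNReal.ofReal l * primitive w (truncate x ε k l) +
        ∫⁻ s in Ioi l, primitive w (truncate x ε k s) ≤ primitive u (truncate x ε k l) := by
  by_cases hlk : l < k
  · set m := max l ε
    have hlm : l ≤ m := le_max_left l ε
    have hm : 0 < m := hl.trans_le hlm
    have hIoc : ∫⁻ s in Ioc l m, primitive w (truncate x ε k s) ≤
        ENNReal.ofReal (m - l) * primitive w (x m) := by
      rw [mul_comm, ← Real.volume_Ioc, ← setLIntegral_const]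
      refine setLIntegral_mono measurable_const fun s hs => primitive_mono w ?_
      exact (truncate_le x ε k s).trans (hx.antitone (max_le_max_right ε hs.1.le))
    have hIoi : ∫⁻ s in Ioi m, primitive w (truncate x ε k s) ≤
        ∫⁻ s in Ioi m, primitive w (x s) :=
      setLIntegral_mono' measurableSet_Ioi fun s _ => primitive_mono w
        ((truncate_le x ε k s).trans (hx.antitone (le_max_left s ε)))
    calc ENNReal.ofReal l * primitive w (truncate x ε k l) +
          ∫⁻ s in Ioi l, primitive w (truncate x ε k s)
        ≤ ENNReal.ofReal l * primitive w (x m) +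
          (ENNReal.ofReal (m - l) * primitive w (x m) + ∫⁻ s in Ioi m, primitive w (x s)) := by
          rw [← Ioc_union_Ioi_eq_Ioi hlm]
          gcongr
          · exact primitive_mono w (truncate_le x ε k l)
          · exact (lintegral_union_le _ _ _).trans (add_le_add hIoc hIoi)
      _ = ENNReal.ofReal m * primitive w (x m) + ∫⁻ s in Ioi m, primitive w (x s) := by
          rw [← add_assoc, ← add_mul, ← ENNReal.ofReal_add hl.le (sub_nonneg.2 hlm),
            add_sub_cancel]
      _ = primitive u (x m) := (hx.primitive_eq_add hN hpq hN_top hm).symm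
      _ = primitive u (truncate x ε k l) := by rw [truncate, if_pos hlk]
  · have hzero {s : ℝ} (hs : l ≤ s) : truncate x ε k s = 0 :=
      truncate_of_le ((not_lt.1 hlk).trans hs)
    rw [hzero le_rfl, setLIntegral_congr_fun measurableSet_Ioi fun s hs => by
      rw [hzero (mem_Ioi.1 hs).le]]
    simp [primitive_zero]

theorem setLIntegral_mul_distrib_rpow_le (hx : IsLevelMap a u w x)
    (hN : IsDecreasingDualBound a u w p N) (hpq : p.HolderConjugate q) (hN_top : N ≠ ⊤)
    (hu : Measurable u) (hw : Measurable w) :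
    ∫⁻ t in Iset a, w t * distrib x t ^ q ≤ N ^ q := by
  have hmeas : Measurable fun l => ENNReal.ofReal (q * l ^ (q - 1)) * primitive w (x l) :=
    (by fun_prop : Measurable fun l : ℝ => ENNReal.ofReal (q * l ^ (q - 1))).mul
      ((primitive_mono w).comp_antitone hx.antitone).measurable
  have hcover : AECover (volume.restrict (Ioi 0)) atTop
      fun n : ℕ => Ico (1 / ((n : ℝ) + 1)) n :=
    (aecover_Ioi_of_Ici tendsto_one_div_add_atTop_nhds_zero_nat).inter
      (aecover_Iio tendsto_natCast_atTop_atTop)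
  have hbound (n : ℕ) : ∫⁻ l in Ico (1 / ((n : ℝ) + 1)) n, ENNReal.ofReal (q * l ^ (q - 1)) *
      primitive w (x l) ∂volume.restrict (Ioi 0) ≤ N ^ q := by
    set ε : ℝ := 1 / ((n : ℝ) + 1)
    have hanti := antitone_truncate hx.antitone ε n
    have hle (l : ℝ) : truncate x ε n l ≤ a := (truncate_le x ε n l).trans (hx.le _)
    calc _ = ∫⁻ l in Ico ε n, ENNReal.ofReal (q * l ^ (q - 1)) *
            primitive w (truncate x ε n l) ∂volume.restrict (Ioi 0) :=
          setLIntegral_congr_fun measurableSet_Ico fun l hl => by rw [truncate_of_mem_Ico hl]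
      _ ≤ ∫⁻ l in Ioi (0 : ℝ), ENNReal.ofReal (q * l ^ (q - 1)) *
            primitive w (truncate x ε n l) := setLIntegral_le_lintegral _ _
      _ = ∫⁻ t in Iset a, w t * distrib (truncate x ε n) t ^ q :=
          (setLIntegral_mul_distrib_rpow hanti hw hle hpq.symm.pos).symm
      _ ≤ N ^ q := hN.setLIntegral_mul_distrib_rpow_le hpq hu hw hanti hle
          (fun _ => hx.truncate_add_le hN hpq hN_top ε n) (distrib_truncate_ne_top x ε n)
          (setLIntegral_mul_distrib_truncate_rpow_ne_top hx.antitone hw hx.le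
            (hx.primitive_ne_top Nat.one_div_pos_of_nat) n.cast_nonneg hpq.symm.pos)
  rw [setLIntegral_mul_distrib_rpow hx.antitone hw hx.le hpq.symm.pos]
  exact le_of_tendsto' (hcover.lintegral_tendsto_of_nat hmeas.aemeasurable) hbound

end IsLevelMap

section Majorant

variable {a N : ℝ≥0∞} {p q : ℝ}

theorem primitive_rearr_min (g : ℝ → ℝ) (y : ℝ≥0∞) :
    primitive (rearr (volI a) g) (min y a) = primitive (rearr (volI a) g) y := by
  simpa only [primitive, rearr, mul_one] using (setLIntegral_rearrE_mul (volI a) (fun _ => 1)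
    (f := fun t => ENNReal.ofReal |g t|) (volI_apply_le a _) y).symm

theorem ae_eq_ofReal_abs_toReal {v : ℝ → ℝ≥0∞} (hv_top : ∀ t ∈ Iset a, v t ≠ ⊤) :
    (fun t => ENNReal.ofReal |(v t).toReal|) =ᵐ[volI a] v := by
  filter_upwards [ae_restrict_mem (measurableSet_Iset a)] with t ht
  rw [abs_of_nonneg ENNReal.toReal_nonneg, ENNReal.ofReal_toReal (hv_top t ht)]

theorem rearr_toReal_le {v : ℝ → ℝ≥0∞} (hv : AntitoneOn v (Iset a))
    (hv_top : ∀ t ∈ Iset a, v t ≠ ⊤) {t : ℝ} (ht : t ∈ Iset a) :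
    rearr (volI a) (fun t => (v t).toReal) t ≤ v t := by
  rw [rearr, rearrE_congr_ae _ (ae_eq_ofReal_abs_toReal hv_top)]
  exact rearrE_volI_le_of_antitoneOn hv ht

theorem primitive_le_primitive_rearr_toReal {v : ℝ → ℝ≥0∞} (hv : Measurable v)
    (hv_top : ∀ t ∈ Iset a, v t ≠ ⊤) {y : ℝ≥0∞} (hy : y ≤ a) :
    primitive v y ≤ primitive (rearr (volI a) fun t => (v t).toReal) y := by
  have hIset : Iset y ∩ Iset a = Iset y := by rw [Iset_inter_Iset, min_eq_left hy]
  have hvol : volI a (Iset y) = y := by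
    rw [volI, Measure.restrict_apply (measurableSet_Iset y), hIset, volume_Iset]
  calc primitive v y = ∫⁻ t in Iset y, v t ∂volI a := by
        rw [volI, Measure.restrict_restrict (measurableSet_Iset y), hIset, primitive]
    _ ≤ primitive (rearrE (volI a) v) y := by
        simpa only [hvol] using setLIntegral_le_primitive_rearrE (volI a) hv (Iset y)
    _ = _ := by rw [← rearrE_congr_ae _ (ae_eq_ofReal_abs_toReal hv_top)]; rfl

theorem IsDecreasingDualBound.exists_antitone_majorant {u w : ℝ → ℝ≥0∞}
    (hN : IsDecreasingDualBound a u w p N) (hpq : p.HolderConjugate q) (hN_top : N ≠ ⊤)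
    (hu : Measurable u) (hw : Measurable w) (hw_pos : ∀ t ∈ Iset a, 0 < w t)
    (hw_top : ∀ y ≤ a, y ≠ ⊤ → primitive w y ≠ ⊤) :
    ∃ d : ℝ → ℝ≥0∞, Antitone d ∧ (∀ t ∈ Iset a, d t ≠ ⊤) ∧
      (∀ y ≤ a, y ≠ ⊤ → primitive u y ≤ primitive (fun t => w t * d t) y) ∧
      ∫⁻ t in Iset a, w t * d t ^ q ≤ N ^ q := by
  obtain ⟨x, hx⟩ := hN.exists_isLevelMap hpq hN_top hu hw hw_pos hw_top
  refine ⟨distrib x, antitone_distrib x,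
    fun t ht => hx.distrib_ne_top hN hpq hN_top hw hw_pos ht.1 ht.2.le, fun y hya hy => ?_,
    hx.setLIntegral_mul_distrib_rpow_le hN hpq hN_top hu hw⟩
  have hy_top := hw_top y hya hy
  rw [← ENNReal.ofReal_toReal hy] at hya hy_top ⊢
  exact hx.primitive_le_setLIntegral_mul_distrib hN hpq hN_top hw hw_pos hya hy_top

end Majorant

section LorentzDual

variable {a : ℝ≥0∞} {w : ℝ → ℝ} {p q : ℝ} {f : ℝ → ℝ}

theorem lorentzDualNorm_le_of_submajorized (hpq : p.HolderConjugate q) (hw : Measurable w)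
    (hw_pos : ∀ t ∈ Iset a, 0 < w t) (hf : Measurable f) (g : ℝ → ℝ)
    (hfg : ∀ x : ℝ, 0 < x →
      ∫⁻ t in Ioo 0 x, rearr (volI a) f t ≤ ∫⁻ t in Ioo 0 x, rearr (volI a) g t) :
    lorentzDualNorm a w p f ≤ (∫⁻ t in Iset a,
      rearr (volI a) g t ^ q * ENNReal.ofReal (w t) ^ (1 - q)) ^ (1 / q) := by
  refine sSup_le ?_
  rintro _ ⟨h, hh, hh1, rfl⟩
  calc ∫⁻ t in Iset a, ENNReal.ofReal |f t * h t|
      = ∫⁻ t, ENNReal.ofReal |f t| * ENNReal.ofReal |h t| ∂volI a := by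
        simp only [abs_mul, ENNReal.ofReal_mul (abs_nonneg _), volI]
    _ ≤ ∫⁻ t in Ioi (0 : ℝ), rearr (volI a) g t * rearr (volI a) h t :=
        lintegral_mul_le_lintegral_rearrE_mul _ (by fun_prop) (by fun_prop)
          (measurable_rearrE _ _) hfg
    _ = ∫⁻ t in Iset a, rearr (volI a) g t * rearr (volI a) h t := by
        have := setLIntegral_rearrE_mul (volI a) (rearr (volI a) h)
          (f := fun t => ENNReal.ofReal |g t|) (volI_apply_le a _) ⊤
        rwa [Iset_top, min_eq_right le_top] at this
    _ ≤ _ * (∫⁻ t in Iset a, rearr (volI a) h t ^ p * ENNReal.ofReal (w t)) ^ (1 / p) :=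
        lintegral_mul_le_weighted_Lp_mul_Lq hpq (measurable_rearrE _ _).aemeasurable
          (measurable_rearrE _ _).aemeasurable hw.ennreal_ofReal.aemeasurable
          ((ae_restrict_mem (measurableSet_Iset a)).mono
            fun t ht => (ENNReal.ofReal_pos.2 (hw_pos t ht)).ne')
          (ae_of_all _ fun _ => ENNReal.ofReal_ne_top)
    _ ≤ _ := mul_le_of_le_one_right' (ENNReal.rpow_le_one hh1 hpq.one_div_nonneg)

theorem primitive_mul_ne_top (hq : 1 ≤ q) {v : ℝ → ℝ≥0∞} (hv : Measurable v)
    {d : ℝ → ℝ≥0∞} {y : ℝ≥0∞} (hy : primitive v y ≠ ⊤)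
    (hvd : ∫⁻ t in Iset y, v t * d t ^ q ≠ ⊤) : primitive (fun t => v t * d t) y ≠ ⊤ := by
  have hd (t : ℝ) : d t ≤ 1 + d t ^ q := by
    rcases le_total (d t) 1 with h | h
    · exact h.trans le_self_add
    · exact (ENNReal.le_rpow_self_of_one_le h hq).trans le_add_self
  have hle : primitive (fun t => v t * d t) y ≤ primitive v y + ∫⁻ t in Iset y, v t * d t ^ q := by
    rw [primitive, primitive, ← lintegral_add_left hv]
    refine lintegral_mono fun t => (mul_le_mul_right (hd t) _).trans_eq ?_
    rw [mul_add, mul_one]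
  exact ne_top_of_le_ne_top (ENNReal.add_ne_top.2 ⟨hy, hvd⟩) hle

theorem mul_rpow_mul_rpow_one_sub {c d : ℝ≥0∞} (hc : c ≠ 0) (hc_top : c ≠ ⊤) (hq : 0 ≤ q) :
    (c * d) ^ q * c ^ (1 - q) = c * d ^ q := by
  rw [ENNReal.mul_rpow_of_nonneg _ _ hq, mul_right_comm, ← ENNReal.rpow_add _ _ hc hc_top,
    add_sub_cancel, ENNReal.rpow_one]

theorem exists_submajorant_le_lorentzDualNorm (hpq : p.HolderConjugate q) (hw : Measurable w)
    (hw_pos : ∀ t ∈ Iset a, 0 < w t) (hw_anti : AntitoneOn w (Iset a))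
    (hW_fin : ∀ t ∈ Iset a, ∫⁻ s in Ioo 0 t, ENNReal.ofReal (w s) ≠ ⊤) (hf : Measurable f)
    (hfin : lorentzDualNorm a w p f ≠ ⊤) :
    ∃ g : ℝ → ℝ, Measurable g ∧
      (∀ x : ℝ, 0 < x → ∫⁻ t in Ioo 0 x, rearr (volI a) g t ≠ ⊤) ∧
      (∀ x : ℝ, 0 < x →
        ∫⁻ t in Ioo 0 x, rearr (volI a) f t ≤ ∫⁻ t in Ioo 0 x, rearr (volI a) g t) ∧
      (∫⁻ t in Iset a, rearr (volI a) g t ^ q * ENNReal.ofReal (w t) ^ (1 - q)) ^ (1 / q) ≤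
        lorentzDualNorm a w p f := by
  have hwE : Measurable fun t => ENNReal.ofReal (w t) := hw.ennreal_ofReal
  have hwE_pos (t) (ht : t ∈ Iset a) : 0 < ENNReal.ofReal (w t) :=
    ENNReal.ofReal_pos.2 (hw_pos t ht)
  have hw_top (y : ℝ≥0∞) (hya : y ≤ a) (hy : y ≠ ⊤) :=
    primitive_ofReal_ne_top_of_antitoneOn hw_anti hW_fin hya hy
  obtain ⟨d, hd, hd_top, hfd, hd_norm⟩ :=
    (isDecreasingDualBound_lorentzDualNorm hw hw_pos hpq.pos hf).exists_antitone_majorant hpq hfin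
      (measurable_rearrE _ _) hwE hwE_pos hw_top
  set v := fun t => ENNReal.ofReal (w t) * d t
  have hv : Measurable v := hwE.mul hd.measurable
  have hv_anti : AntitoneOn v (Iset a) := fun s hs t ht hst =>
    mul_le_mul' (ENNReal.ofReal_le_ofReal (hw_anti hs ht hst)) (hd hst)
  have hv_top (t) (ht : t ∈ Iset a) : v t ≠ ⊤ :=
    ENNReal.mul_ne_top ENNReal.ofReal_ne_top (hd_top t ht)
  have hle (t) (ht : t ∈ Iset a) := rearr_toReal_le hv_anti hv_top ht
  refine ⟨fun t => (v t).toReal, hv.ennreal_toReal, fun x _ => ?_, fun x _ => ?_, ?_⟩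
  · rw [← primitive_ofReal, ← primitive_rearr_min]
    have hy : min (ENNReal.ofReal x) a ≤ a := min_le_right _ _
    refine ne_top_of_le_ne_top (primitive_mul_ne_top hpq.symm.lt.le hwE
      (hw_top _ hy (min_lt_of_left_lt ENNReal.ofReal_lt_top).ne) ?_)
      (setLIntegral_mono' (measurableSet_Iset _) fun t ht => hle t (Iset_mono hy ht))
    exact ne_top_of_le_ne_top (ENNReal.rpow_ne_top_of_nonneg hpq.symm.nonneg hfin)
      ((lintegral_mono_set (Iset_mono hy)).trans hd_norm)
  · rw [← primitive_ofReal, ← primitive_ofReal, ← primitive_rearr_min,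
      ← primitive_rearr_min _ (ENNReal.ofReal x)]
    have hy : min (ENNReal.ofReal x) a ≤ a := min_le_right _ _
    exact (hfd _ hy (min_lt_of_left_lt ENNReal.ofReal_lt_top).ne).trans
      (primitive_le_primitive_rearr_toReal hv hv_top hy)
  · rw [one_div, ENNReal.rpow_inv_le_iff hpq.symm.pos]
    refine (setLIntegral_mono' (measurableSet_Iset a) fun t ht => ?_).trans hd_norm
    rw [← mul_rpow_mul_rpow_one_sub (hwE_pos t ht).ne' ENNReal.ofReal_ne_top hpq.symm.nonneg]
    exact mul_le_mul_left (ENNReal.rpow_le_rpow (hle t ht) hpq.symm.nonneg) _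

end LorentzDual

theorem stmt_17_general (a : ℝ≥0∞) (w : ℝ → ℝ)
    (hw_pos : ∀ x ∈ Iset a, 0 < w x) (hw_anti : AntitoneOn w (Iset a)) (hw_meas : Measurable w)
    (hW_fin : ∀ t ∈ Iset a, ∫⁻ s in Set.Ioo 0 t, ENNReal.ofReal (w s) ≠ ∞)
    (p q : ℝ) (hp : 1 < p) (hpq : 1 / p + 1 / q = 1)
    (f : ℝ → ℝ) (hf : Measurable f) :
    lorentzDualNorm a w p f
      = sInf {c : ℝ≥0∞ | ∃ g : ℝ → ℝ, Measurable g ∧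
          (∀ x : ℝ, 0 < x → ∫⁻ t in Set.Ioo 0 x, rearr (volI a) g t ≠ ∞) ∧
          (∀ x : ℝ, 0 < x →
            ∫⁻ t in Set.Ioo 0 x, rearr (volI a) f t ≤ ∫⁻ t in Set.Ioo 0 x, rearr (volI a) g t) ∧
          c = (∫⁻ t in Iset a,
                rearr (volI a) g t ^ q * ENNReal.ofReal (w t) ^ (1 - q)) ^ (1 / q)} := by
  have hpq' : p.HolderConjugate q :=
    Real.holderConjugate_iff.2 ⟨hp, by simpa only [one_div] using hpq⟩
  refine le_antisymm (le_sInf ?_) ?_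
  · rintro _ ⟨g, -, -, hfg, rfl⟩
    exact lorentzDualNorm_le_of_submajorized hpq' hw_meas hw_pos hf g hfg
  · rcases eq_or_ne (lorentzDualNorm a w p f) ⊤ with htop | hfin
    · exact le_top.trans_eq htop.symm
    obtain ⟨g, hg, hg_loc, hfg, hg_le⟩ :=
      exists_submajorant_le_lorentzDualNorm hpq' hw_meas hw_pos hw_anti hW_fin hf hfin
    refine le_trans (sInf_le ?_) hg_le
    exact ⟨g, hg, hg_loc, hfg, rfl⟩

/-- For `1 < p < ∞`, `1/p + 1/q = 1`, and a non-increasing positive weight `w`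
with `W` finite, if `N(f) < ∞` then
`N(f) = inf { (∫_I (g*)^q w^{1−q})^{1/q} : g* locally integrable, f ≺ g }`. -/
theorem stmt_17 (a : ℝ≥0∞) (ha : 0 < a) (w : ℝ → ℝ)
    (hw_pos : ∀ x ∈ Iset a, 0 < w x) (hw_anti : AntitoneOn w (Iset a)) (hw_meas : Measurable w)
    (hW_fin : ∀ t ∈ Iset a, ∫⁻ s in Set.Ioo 0 t, ENNReal.ofReal (w s) ≠ ∞)
    (p q : ℝ) (hp : 1 < p) (hpq : 1/p + 1/q = 1)
    (f : ℝ → ℝ) (hf : Measurable f)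
    (hfin : lorentzDualNorm a w p f ≠ ∞) :
    lorentzDualNorm a w p f
      = sInf {c : ℝ≥0∞ | ∃ g : ℝ → ℝ, Measurable g ∧
          (∀ x : ℝ, 0 < x → ∫⁻ t in Set.Ioo 0 x, rearr (volI a) g t ≠ ∞) ∧
          (∀ x : ℝ, 0 < x →
            ∫⁻ t in Set.Ioo 0 x, rearr (volI a) f t ≤ ∫⁻ t in Set.Ioo 0 x, rearr (volI a) g t) ∧
          c = (∫⁻ t in Iset a,
                rearr (volI a) g t ^ q * ENNReal.ofReal (w t) ^ (1 - q)) ^ (1/q)} := by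
  exact stmt_17_general a w hw_pos hw_anti hw_meas hW_fin p q hp hpq f hf
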